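/- arXiv:2003.08083 — 3 statements merged into one kernel-verified Lean document; each statement's English description precedes it below -/
import Mathlib

section
/- Every integer greater than two can be written as the sum of a prime and a square-free number. -/
/-! ### Finite verification by bit masks -/

/-- bit mask of the multiples of `m` below `m * 2 ^ t` -/
def multMask (m : ℕ) (t : ℕ) : ℕ :=
  Nat.rec 1 (fun i r => Nat.lor r (Nat.shiftLeft r (m * 2 ^ i))) t

/-- mask of the numbers below `M` divisible by the square of a member of the list. -/
def sqMask (M : ℕ) : List ℕ → ℕ :=
  List.rec 1 (fun q _ r => Nat.lor r (multMask (q * q) (Nat.log2 (M / (q * q)) + 1)))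

def sqPrimes : List ℕ := [2, 3, 5, 7, 11, 13, 17, 19, 23, 29, 31, 37, 41, 43, 47, 53, 59, 61, 67, 71, 73, 79, 83, 89, 97, 101, 103, 107, 109, 113, 127, 131, 137, 139, 149, 151, 157, 163, 167, 173, 179, 181, 191, 193, 197, 199, 211, 223, 227, 229, 233, 239, 241, 251, 257, 263, 269, 271, 277, 281, 283, 293, 307, 311, 313, 317, 331, 337, 347, 349, 353, 359, 367, 373, 379, 383, 389, 397, 401, 409, 419, 421, 431, 433, 439, 443, 449, 457, 461, 463, 467, 479, 487, 491, 499, 503, 509, 521, 523, 541, 547, 557, 563, 569, 571, 577, 587, 593, 599, 601, 607, 613, 617, 619, 631, 641, 643, 647, 653, 659, 661, 673, 677, 683, 691, 701, 709, 719, 727, 733, 739, 743, 751, 757, 761, 769, 773, 787, 797, 809, 811, 821, 823, 827, 829, 839, 853, 857, 859, 863, 877, 881, 883, 887, 907, 911, 919, 929, 937, 941, 947, 953, 967, 971, 977, 983, 991, 997, 1009, 1013, 1019, 1021, 1031, 1033, 1039, 1049, 1051, 1061, 1063, 1069, 1087, 1091, 1093, 1097, 1103, 1109, 1117, 1123, 1129,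 1151, 1153, 1163, 1171, 1181, 1187, 1193, 1201, 1213, 1217, 1223, 1229, 1231, 1237, 1249, 1259, 1277, 1279, 1283, 1289, 1291, 1297, 1301, 1303, 1307, 1319, 1321, 1327, 1361, 1367, 1373, 1381, 1399, 1409, 1423, 1427, 1429, 1433, 1439, 1447, 1451, 1453, 1459, 1471, 1481, 1483, 1487, 1489, 1493, 1499, 1511, 1523, 1531, 1543, 1549, 1553, 1559, 1567, 1571, 1579, 1583, 1597, 1601, 1607, 1609, 1613, 1619, 1621, 1627, 1637, 1657, 1663, 1667, 1669, 1693, 1697, 1699, 1709, 1721, 1723, 1733, 1741, 1747, 1753, 1759, 1777, 1783, 1787, 1789, 1801, 1811, 1823, 1831, 1847, 1861, 1867, 1871, 1873, 1877, 1879, 1889, 1901, 1907, 1913, 1931, 1933, 1949, 1951, 1973, 1979, 1987, 1993, 1997, 1999, 2003, 2011, 2017, 2027, 2029, 2039]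

/-- the shifted mask: numbers `n` with `n < p` or `n - p` flagged -/
def shiftMask (B p : ℕ) : ℕ := Nat.lor (Nat.shiftLeft B p) (2 ^ p - 1)

def failMask (B : ℕ) : List ℕ → ℕ :=
  List.rec (Nat.shiftLeft B 2) (fun p _ r => Nat.land r (shiftMask B p))

def smallPrimes : List ℕ := [3, 5, 7, 11, 13, 17, 19, 23, 29, 31, 37, 41, 43, 47, 53]

def bigMask : ℕ := sqMask 4194304 sqPrimes

set_option maxRecDepth 100000 in
theorem fail_check : Nat.blt (failMask bigMask smallPrimes % 2 ^ 4194304) 8 = true := by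
  decide +kernel

def hasDivisor (q : ℕ) : List ℕ → Bool :=
  List.rec false (fun p _ r => or (Nat.beq (q % p) 0) r)

def allHaveDivisor (l : List ℕ) (q : ℕ) : Bool :=
  Nat.rec true (fun i r => and (or (Nat.ble i 1) (hasDivisor i l)) r) q

set_option maxRecDepth 100000 in
theorem allHaveDivisor_check : allHaveDivisor sqPrimes 2048 = true := by
  decide +kernel

theorem hasDivisor_spec (q : ℕ) (l : List ℕ) (h : hasDivisor q l = true) : ∃ p ∈ l, p ∣ q := by
  induction l with
  | nil => exact absurd h (by simp [hasDivisor])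
  | cons p l ih =>
    have h' : (Nat.beq (q % p) 0 || hasDivisor q l) = true := h
    rw [Bool.or_eq_true] at h'
    rcases h' with h' | h'
    · exact ⟨p, by simp, Nat.dvd_of_mod_eq_zero (Nat.eq_of_beq_eq_true h')⟩
    · obtain ⟨p, hp, hq⟩ := ih h'
      exact ⟨p, by simp [hp], hq⟩

theorem allHaveDivisor_spec (l : List ℕ) (N : ℕ) (h : allHaveDivisor l N = true) :
    ∀ q < N, 2 ≤ q → ∃ p ∈ l, p ∣ q := by
  induction N with
  | zero => intro q hq; omega
  | succ N ih =>
    have h' : ((Nat.ble N 1 || hasDivisor N l) && allHaveDivisor l N) = true := h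
    rw [Bool.and_eq_true, Bool.or_eq_true] at h'
    intro q hq h2
    rcases Nat.lt_succ_iff_lt_or_eq.mp hq with hq | hq
    · exact ih h'.2 q hq h2
    · subst hq
      rcases h'.1 with h1 | h1
      · have := Nat.le_of_ble_eq_true h1
        omega
      · exact hasDivisor_spec _ _ h1

theorem multMask_spec (m t i : ℕ) (hd : m ∣ i) (hi : i < m * 2 ^ t) :
    (multMask m t).testBit i = true := by
  induction t generalizing i with
  | zero =>
    have : i = 0 := Nat.eq_zero_of_dvd_of_lt hd (by simpa using hi)
    subst this
    simp [multMask]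
  | succ t ih =>
    have e : multMask m (t + 1) = multMask m t ||| (multMask m t <<< (m * 2 ^ t)) := rfl
    rw [e, Nat.testBit_or, Nat.testBit_shiftLeft, Bool.or_eq_true]
    by_cases h : i < m * 2 ^ t
    · exact Or.inl (ih i hd h)
    · right
      rw [Bool.and_eq_true]
      refine ⟨by simpa using h, ih _ ((Nat.dvd_sub hd (Dvd.intro _ rfl))) ?_⟩
      rw [pow_succ, ← mul_assoc] at hi
      omega

theorem sqMask_spec (M : ℕ) (l : List ℕ) (q i : ℕ) (hq : q ∈ l) (h0 : 0 < q) (hd : q * q ∣ i)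
    (hi : i ≤ M) : (sqMask M l).testBit i = true := by
  induction l with
  | nil => simp at hq
  | cons p l ih =>
    have e : sqMask M (p :: l) =
      sqMask M l ||| multMask (p * p) (Nat.log2 (M / (p * p)) + 1) := rfl
    rw [e, Nat.testBit_or, Bool.or_eq_true]
    rcases List.mem_cons.mp hq with h | h
    · subst h
      right
      apply multMask_spec _ _ _ hd
      have h1 : M / (q * q) < 2 ^ (Nat.log2 (M / (q * q)) + 1) := Nat.lt_log2_self
      have h2 : M < (q * q) * (M / (q * q) + 1) := Nat.lt_mul_div_succ M (by positivity)
      calc i ≤ M := hi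
        _ < (q * q) * (M / (q * q) + 1) := h2
        _ ≤ _ := Nat.mul_le_mul_left _ h1
    · exact Or.inl (ih h)

theorem bigMask_spec (k : ℕ) (hk : k < 4194304) (h : ¬ Squarefree k) :
    bigMask.testBit k = true := by
  rcases Nat.eq_zero_or_pos k with h0 | h0
  · subst h0
    exact sqMask_spec _ _ 2 0 (by decide) (by norm_num) (by simp) (by simp)
  · rw [Nat.squarefree_iff_prime_squarefree] at h
    push Not at h
    obtain ⟨q, hq, hd⟩ := h
    have h1 : q * q ≤ k := Nat.le_of_dvd h0 hd
    have h2 : q < 2048 := by nlinarith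
    obtain ⟨p, hp, hpq⟩ := allHaveDivisor_spec _ _ allHaveDivisor_check q h2 hq.two_le
    exact sqMask_spec _ _ p k hp (Nat.pos_of_dvd_of_pos hpq hq.pos)
      ((Nat.mul_dvd_mul hpq hpq).trans hd) hk.le

theorem failMask_spec (B n : ℕ) (l : List ℕ)
    (h : ∀ p ∈ 2 :: l, n < p ∨ B.testBit (n - p) = true) (hn : 2 ≤ n) :
    (failMask B l).testBit n = true := by
  induction l with
  | nil =>
    have e : failMask B [] = B <<< 2 := rfl
    rw [e, Nat.testBit_shiftLeft, Bool.and_eq_true]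
    refine ⟨by simpa using hn, ?_⟩
    rcases h 2 (by simp) with h | h
    · omega
    · exact h
  | cons p l ih =>
    have e : failMask B (p :: l) = failMask B l &&& (B <<< p ||| (2 ^ p - 1)) := rfl
    rw [e, Nat.testBit_and, Nat.testBit_or, Nat.testBit_shiftLeft, Nat.testBit_two_pow_sub_one,
      Bool.and_eq_true, Bool.or_eq_true, Bool.and_eq_true]
    refine ⟨ih fun p' hp' => h p' ?_, ?_⟩
    · rcases List.mem_cons.mp hp' with h | h
      · simp [h]
      · simp [h]
    · rcases lt_or_ge n p with h1 | h1
      · right; simpa using h1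
      · left
        refine ⟨by simpa using h1, ?_⟩
        rcases h p (by simp) with h | h
        · omega
        · exact h

theorem fail_gen (F E n : ℕ) (h : Nat.blt (F % 2 ^ E) 8 = true) (hn : 2 < n) (hE : n < E)
    (hF : F.testBit n = true) : False := by
  have hlt : F % 2 ^ E < 8 := Nat.le_of_ble_eq_true h
  have h2 : (F % 2 ^ E).testBit n = true := by
    rw [Nat.testBit_mod_two_pow, hF]
    simpa using hE
  have h3 := Nat.ge_two_pow_of_testBit h2
  have h4 : 2 ^ 3 ≤ 2 ^ n := Nat.pow_le_pow_right (by norm_num) hn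
  omega

/-- The theorem below `2 ^ 22`. -/
theorem small_case (n : ℕ) (hn : 2 < n) (hM : n < 4194304) :
    ∃ p k : ℕ, p.Prime ∧ Squarefree k ∧ n = p + k := by
  by_contra hcon
  push Not at hcon
  have hpr : ∀ p ∈ 2 :: smallPrimes, p.Prime := by
    intro p hp
    simp only [smallPrimes, List.mem_cons, List.not_mem_nil, or_false] at hp
    rcases hp with h | h | h | h | h | h | h | h | h | h | h | h | h | h | h | h <;>
      (subst h; norm_num)
  have hF : (failMask bigMask smallPrimes).testBit n = true := by
    refine failMask_spec _ _ _ (fun p hp => ?_) hn.le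
    by_contra! hc
    refine hcon p (n - p) (hpr p hp) ?_ (by omega)
    by_contra hs
    exact hc.2 (bigMask_spec _ (by omega) hs)
  exact fail_gen _ _ _ fail_check hn hM hF

/-! ### An upper bound for primes in a progression -/

theorem factorial_exp_bound (p e J : ℕ) (hp : p.Prime) (h : p ^ e ∣ J.factorial) :
    (p - 1) * e ≤ J := by
  have hf : Fact p.Prime := ⟨hp⟩
  have h1 : e ≤ padicValNat p J.factorial :=
    (padicValNat_dvd_iff_le (Nat.factorial_ne_zero J)).mp h
  have h2 := sub_one_mul_padicValNat_factorial (p := p) J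
  calc (p - 1) * e ≤ (p - 1) * padicValNat p J.factorial := Nat.mul_le_mul_left _ h1
    _ = _ := h2
    _ ≤ J := Nat.sub_le _ _

theorem coprime_part_dvd (m r J D : ℕ) (hD : D ∣ J.factorial) (hc : Nat.Coprime m D)
    : D ∣ ∏ i ∈ Finset.range J, (r + i * m) := by
  have hD0 : D ≠ 0 := by
    rintro rfl
    exact Nat.factorial_ne_zero J (Nat.eq_zero_of_zero_dvd hD)
  have : NeZero D := ⟨hD0⟩
  obtain ⟨u, hu⟩ : ∃ u : ℕ, (u : ZMod D) * m = 1 := by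
    refine ⟨((m : ZMod D)⁻¹).val, ?_⟩
    rw [ZMod.natCast_zmod_val, mul_comm]
    exact ZMod.coe_mul_inv_eq_one m hc
  have h1 : D ∣ (u * r).ascFactorial J := hD.trans (Nat.factorial_dvd_ascFactorial _ _)
  rw [← ZMod.natCast_eq_zero_iff] at h1 ⊢
  rw [Nat.ascFactorial_eq_prod_range] at h1
  have h2 : ((∏ i ∈ Finset.range J, (u * r + i) : ℕ) : ZMod D) =
      (u : ZMod D) ^ J * ((∏ i ∈ Finset.range J, (r + i * m) : ℕ) : ZMod D) := by
    push_cast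
    have h3 : (u : ZMod D) ^ J = ∏ _i ∈ Finset.range J, (u : ZMod D) := by simp
    rw [h3, ← Finset.prod_mul_distrib]
    refine Finset.prod_congr rfl fun i _ => ?_
    linear_combination (-(i : ZMod D)) * hu
  rw [h2] at h1
  have hU : IsUnit ((u : ZMod D) ^ J) := (IsUnit.of_mul_eq_one _ hu).pow J
  exact (hU.mul_right_eq_zero).mp h1

theorem class_prod_bound (q r J : ℕ) (hq : q.Prime) (h5 : 5 ≤ q) (hr0 : 0 < r)
    (hr : r ≤ 12 * q ^ 2) (S : Finset ℕ) (hS : ∀ p ∈ S, p.Prime)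
    (hSJ : ∀ p ∈ S, J < p) (hSr : ∀ p ∈ S, ∃ i < J, p = r + i * (12 * q ^ 2)) :
    ∑ p ∈ S, Real.log p ≤
      J * (Real.log 12 + Real.log 2 + Real.log 3 / 2 + 9 / 4 * Real.log q) := by
  set m := 12 * q ^ 2 with hm
  obtain ⟨a, A, hA, hJ1⟩ := Nat.exists_eq_pow_mul_and_not_dvd (Nat.factorial_ne_zero J) 2 (by norm_num)
  have hA0 : A ≠ 0 := by rintro rfl; simp at hA
  obtain ⟨b, B, hB, hJ2⟩ := Nat.exists_eq_pow_mul_and_not_dvd hA0 3 (by norm_num)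
  have hB0 : B ≠ 0 := by rintro rfl; simp at hB
  obtain ⟨c, D, hD, hJ3⟩ := Nat.exists_eq_pow_mul_and_not_dvd hB0 q (by omega)
  have hD0 : 0 < D := by
    rcases Nat.eq_zero_or_pos D with h | h
    · subst h; simp at hD
    · exact h
  have hJ : J.factorial = 2 ^ a * (3 ^ b * (q ^ c * D)) := by rw [hJ1, hJ2, hJ3]
  have hDJ : D ∣ J.factorial := by
    rw [hJ]; exact Dvd.intro_left (2 ^ a * (3 ^ b * q ^ c)) (by ring)
  have ha : (2 - 1) * a ≤ J := factorial_exp_bound 2 a J Nat.prime_two (by rw [hJ]; exact Dvd.intro _ rfl)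
  have hb : (3 - 1) * b ≤ J := factorial_exp_bound 3 b J Nat.prime_three
    (by rw [hJ]; exact ⟨2 ^ a * (q ^ c * D), by ring⟩)
  have hcc : (q - 1) * c ≤ J := factorial_exp_bound q c J hq
    (by rw [hJ]; exact ⟨2 ^ a * 3 ^ b * D, by ring⟩)
  have hc : 4 * c ≤ J := le_trans (Nat.mul_le_mul_right c (by omega)) hcc
  have c2 : Nat.Coprime 2 D := (Nat.Prime.coprime_iff_not_dvd Nat.prime_two).mpr
    fun h => hA (by rw [hJ2, hJ3]; exact (h.mul_left _).mul_left _)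
  have c3 : Nat.Coprime 3 D := (Nat.Prime.coprime_iff_not_dvd Nat.prime_three).mpr
    fun h => hB (by rw [hJ3]; exact (h.mul_left _))
  have cq : Nat.Coprime q D := (Nat.Prime.coprime_iff_not_dvd hq).mpr hD
  have cm : Nat.Coprime m D := by
    have : m = 2 ^ 2 * 3 * q ^ 2 := by rw [hm]; norm_num
    rw [this]
    exact Nat.Coprime.mul_left (Nat.Coprime.mul_left (c2.pow_left 2) c3) (cq.pow_left 2)
  set P := ∏ i ∈ Finset.range J, (r + i * m) with hP
  have hP0 : 0 < P := Finset.prod_pos fun i _ => by omega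
  have d1 : D ∣ P := coprime_part_dvd m r J D hDJ cm
  have d2 : ∏ p ∈ S, p ∣ P := by
    apply Finset.prod_primes_dvd
    · intro p hp; exact (hS p hp).prime
    · intro p hp
      obtain ⟨i, hi, e⟩ := hSr p hp
      rw [e]
      exact Finset.dvd_prod_of_mem (fun i => r + i * m) (Finset.mem_range.mpr hi)
  have cS : Nat.Coprime D (∏ p ∈ S, p) := by
    apply Nat.Coprime.prod_right
    intro p hp
    rw [Nat.coprime_comm, Nat.Prime.coprime_iff_not_dvd (hS p hp)]
    intro h
    have := ((hS p hp).dvd_factorial).mp (h.trans hDJ)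
    have := hSJ p hp
    omega
  have d3 : D * ∏ p ∈ S, p ∣ P := cS.mul_dvd_of_dvd_of_dvd d1 d2
  have hle : D * ∏ p ∈ S, p ≤ P := Nat.le_of_dvd hP0 d3
  have hPle : P ≤ m ^ J * J.factorial := by
    have : m ^ J * J.factorial = ∏ i ∈ Finset.range J, (m * (i + 1)) := by
      rw [Finset.prod_mul_distrib, Finset.prod_range_add_one_eq_factorial]; simp
    rw [this]
    refine Finset.prod_le_prod' fun i _ => ?_
    nlinarith
  have hfin : ∏ p ∈ S, p ≤ m ^ J * (2 ^ a * (3 ^ b * q ^ c)) := by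
    refine Nat.le_of_mul_le_mul_left (le_trans hle (hPle.trans (le_of_eq ?_))) hD0
    rw [hJ]; ring
  have hq0 : (0 : ℝ) < q := by exact_mod_cast hq.pos
  have hlog : ∑ p ∈ S, Real.log p = Real.log ((∏ p ∈ S, p : ℕ) : ℝ) := by
    push_cast
    rw [Real.log_prod]
    intro p hp
    exact_mod_cast (hS p hp).ne_zero
  rw [hlog]
  have hSpos : 0 < ∏ p ∈ S, p := Finset.prod_pos fun p hp => (hS p hp).pos
  have h1 : Real.log ((∏ p ∈ S, p : ℕ) : ℝ) ≤
      Real.log ((m ^ J * (2 ^ a * (3 ^ b * q ^ c)) : ℕ) : ℝ) :=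
    Real.log_le_log (by exact_mod_cast hSpos) (by exact_mod_cast hfin)
  refine h1.trans ?_
  rw [hm]
  push_cast
  rw [Real.log_mul (by positivity) (by positivity), Real.log_mul (by positivity) (by positivity),
    Real.log_mul (by positivity) (by positivity), Real.log_pow, Real.log_pow, Real.log_pow,
    Real.log_pow, Real.log_mul (by positivity) (by positivity), Real.log_pow]
  have l2 : 0 ≤ Real.log 2 := Real.log_nonneg (by norm_num)
  have l3 : 0 ≤ Real.log 3 := Real.log_nonneg (by norm_num)
  have lq : 0 ≤ Real.log q := Real.log_nonneg (by exact_mod_cast hq.one_le)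
  have e1 : (a : ℝ) ≤ J := by exact_mod_cast (by omega : a ≤ J)
  have e2 : (2 : ℝ) * b ≤ J := by exact_mod_cast (by omega : 2 * b ≤ J)
  have e3 : (4 : ℝ) * c ≤ J := by exact_mod_cast hc
  have := mul_le_mul_of_nonneg_right e1 l2
  have := mul_le_mul_of_nonneg_right e2 l3
  have := mul_le_mul_of_nonneg_right e3 lq
  push_cast
  linarith

/-! ### A lower bound for primes in a class modulo 12 -/

/-- number of `k ∈ [1, y]` with `k % 12 = b` (for `1 ≤ b ≤ 11`) -/
def cls (b y : ℕ) : ℕ := (y + 12 - b) / 12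

theorem key_ineq (c y : ℕ) (hc : c = 1 ∨ c = 5 ∨ c = 7 ∨ c = 11) (hy : 0 < y) :
    cls c y ≤ cls (5 * c % 12) (y / 4) + cls (7 * c % 12) (y / 4) + cls (11 * c % 12) (y / 4)
      + cls c (y / 12) + cls (5 * c % 12) (y / 12) + cls (7 * c % 12) (y / 12)
      + (if c = 1 ∨ 41 ≤ y then 1 else 0) := by
  have hper : ∀ b s t, b ≤ 12 → cls b (12 * t + s) = t + cls b s := by
    intro b s t hb; unfold cls; omega
  obtain ⟨t, s, hs, rfl⟩ : ∃ t s, s < 144 ∧ y = 144 * t + s :=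
    ⟨y / 144, y % 144, Nat.mod_lt _ (by norm_num), (Nat.div_add_mod y 144).symm⟩
  have e1 : (144 * t + s) / 4 = 12 * (3 * t) + s / 4 := by omega
  have e2 : (144 * t + s) / 12 = 12 * t + s / 12 := by omega
  have e3 : 144 * t + s = 12 * (12 * t) + s := by omega
  have hm : ∀ z, z % 12 ≤ 12 := fun z => by omega
  have hc12 : c ≤ 12 := by omega
  rw [e1, e2, hper _ _ _ (hm _), hper _ _ _ (hm _), hper _ _ _ (hm _), hper _ _ _ hc12,
    hper _ _ _ (hm _), hper _ _ _ (hm _)]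
  have e4 : cls c (144 * t + s) = 12 * t + cls c s := by rw [e3, hper _ _ _ hc12]
  rw [e4]
  have key : ∀ c ∈ [1, 5, 7, 11], ∀ s < 144,
      (cls c s ≤ cls (5 * c % 12) (s / 4) + cls (7 * c % 12) (s / 4) + cls (11 * c % 12) (s / 4)
      + cls c (s / 12) + cls (5 * c % 12) (s / 12) + cls (7 * c % 12) (s / 12)
      + (if c = 1 ∨ 41 ≤ s then 1 else 0)) := by decide +kernel
  have k := key c (by rcases hc with h | h | h | h <;> simp [h]) s hs
  split_ifs at k ⊢ <;> omega

theorem filter_eq_image (b y : ℕ) (hb : 1 ≤ b) (hb' : b ≤ 11) :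
    (Finset.Icc 1 y).filter (fun k => k % 12 = b) =
      (Finset.range (cls b y)).image (fun i => b + 12 * i) := by
  ext k
  simp only [Finset.mem_filter, Finset.mem_Icc, Finset.mem_image, Finset.mem_range, cls]
  constructor
  · rintro ⟨⟨h1, h2⟩, h3⟩
    exact ⟨k / 12, by omega, by omega⟩
  · rintro ⟨i, hi, rfl⟩
    omega

theorem card_class (b y : ℕ) (hb : 1 ≤ b) (hb' : b ≤ 11) :
    ((Finset.Icc 1 y).filter (fun k => k % 12 = b)).card = cls b y := by
  rw [filter_eq_image b y hb hb', Finset.card_image_of_injective, Finset.card_range]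
  intro i j h
  simpa using h

/-- sum of logarithms over a residue class -/
noncomputable def tsum12 (b y : ℕ) : ℝ :=
  ∑ k ∈ (Finset.Icc 1 y).filter (fun k => k % 12 = b), Real.log k

theorem tsum12_eq (b y : ℕ) (hb : 1 ≤ b) (hb' : b ≤ 11) :
    tsum12 b y = ∑ i ∈ Finset.range (cls b y), Real.log ((b : ℝ) + 12 * i) := by
  unfold tsum12
  rw [filter_eq_image b y hb hb', Finset.sum_image]
  · refine Finset.sum_congr rfl fun i _ => ?_
    push_cast; rfl
  · intro i _ j _ h
    simpa using h

noncomputable def gfun (t : ℝ) : ℝ := t * Real.log t - t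

theorem gfun_step_lower (t : ℝ) (ht : 0 < t) : 12 * Real.log t ≤ gfun (t + 12) - gfun t := by
  unfold gfun
  have h := Real.one_sub_inv_le_log_of_pos (x := (t + 12) / t) (by positivity)
  rw [Real.log_div (by positivity) (by positivity), inv_div] at h
  have h2 := mul_le_mul_of_nonneg_left h (by positivity : 0 ≤ t + 12)
  have h3 : (t + 12) * (1 - t / (t + 12)) = 12 := by field_simp; ring
  rw [h3] at h2
  linarith

theorem gfun_step_upper (t : ℝ) (ht : 0 < t) :
    gfun (t + 12) - gfun t ≤ 12 * Real.log (t + 12) := by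
  unfold gfun
  have h := Real.log_le_sub_one_of_pos (x := (t + 12) / t) (by positivity)
  rw [Real.log_div (by positivity) (by positivity)] at h
  have h2 := mul_le_mul_of_nonneg_left h ht.le
  have h3 : t * ((t + 12) / t - 1) = 12 := by field_simp; ring
  rw [h3] at h2
  linarith

theorem gfun_mono (s t : ℝ) (hs : 1 ≤ s) (hst : s ≤ t) : gfun s ≤ gfun t := by
  unfold gfun
  have ht : 0 < t := by linarith
  have hs0 : 0 < s := by linarith
  have h := Real.one_sub_inv_le_log_of_pos (x := t / s) (by positivity)
  rw [Real.log_div (by positivity) (by positivity), inv_div] at h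
  have h2 := mul_le_mul_of_nonneg_left h ht.le
  have h3 : t * (1 - s / t) = t - s := by field_simp
  rw [h3] at h2
  have h4 : 0 ≤ (t - s) * Real.log s := mul_nonneg (by linarith) (Real.log_nonneg hs)
  linarith

theorem logsum_upper (b : ℝ) (hb : 0 < b) (K : ℕ) :
    ∑ i ∈ Finset.range K, Real.log (b + 12 * i) ≤ (gfun (b + 12 * K) - gfun b) / 12 := by
  induction K with
  | zero => simp
  | succ K ih =>
    rw [Finset.sum_range_succ]
    have h := gfun_step_lower (b + 12 * K) (by positivity)
    have e : b + 12 * ((K + 1 : ℕ) : ℝ) = b + 12 * K + 12 := by push_cast; ring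
    rw [e]
    linarith

theorem logsum_lower (b : ℝ) (hb : 0 < b) (K : ℕ) :
    Real.log b + (gfun (b + 12 * K) - gfun b) / 12 ≤
      ∑ i ∈ Finset.range (K + 1), Real.log (b + 12 * i) := by
  induction K with
  | zero => simp
  | succ K ih =>
    rw [Finset.sum_range_succ]
    have h := gfun_step_upper (b + 12 * K) (by positivity)
    have e : b + 12 * ((K + 1 : ℕ) : ℝ) = b + 12 * K + 12 := by push_cast; ring
    rw [e]
    linarith

theorem tsum12_upper (b y : ℕ) (Y : ℝ) (hb : 1 ≤ b) (hb' : b ≤ 11) (hY : (y : ℝ) ≤ Y)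
    (hY1 : 0 < Y) :
    tsum12 b y ≤ gfun Y / 12 + Real.log (Y + 12) + 1 / 12 := by
  rw [tsum12_eq b y hb hb']
  have hb1 : (1 : ℝ) ≤ b := by exact_mod_cast hb
  have h1 := logsum_upper b (by positivity) (cls b y)
  have h2 : b + 12 * cls b y ≤ y + 12 := by unfold cls; omega
  have h2' : (b : ℝ) + 12 * cls b y ≤ y + 12 := by exact_mod_cast h2
  have h3 := gfun_mono (b + 12 * cls b y) (Y + 12)
    (by have : (0 : ℝ) ≤ 12 * cls b y := by positivity
        linarith) (by linarith)
  have h4 := gfun_step_upper Y hY1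
  have h5 : -1 ≤ gfun b := by
    have := gfun_mono 1 b le_rfl hb1
    simpa [gfun] using this
  linarith

theorem tsum12_lower (b y : ℕ) (hb : 1 ≤ b) (hb' : b ≤ 11) (hy : 13 ≤ y) :
    gfun y / 12 - Real.log y ≤ tsum12 b y := by
  rw [tsum12_eq b y hb hb']
  have hb1 : (1 : ℝ) ≤ b := by exact_mod_cast hb
  have hb2 : (b : ℝ) ≤ 11 := by exact_mod_cast hb'
  have hy1 : (13 : ℝ) ≤ y := by exact_mod_cast hy
  obtain ⟨K, hK⟩ : ∃ K, cls b y = K + 1 := ⟨cls b y - 1, by unfold cls; omega⟩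
  rw [hK]
  have h1 := logsum_lower b (by positivity) K
  have h2 : y ≤ b + 12 * K + 12 := by unfold cls at hK; omega
  have h2' : (y : ℝ) ≤ b + 12 * K + 12 := by exact_mod_cast h2
  have h3 := gfun_mono (y - 12) (b + 12 * K) (by linarith) (by linarith)
  have h4 := gfun_step_upper (y - 12) (by linarith)
  rw [sub_add_cancel] at h4
  have h5 : gfun b / 12 ≤ Real.log b := by
    unfold gfun
    have : 0 ≤ Real.log b * (12 - b) := mul_nonneg (Real.log_nonneg hb1) (by linarith)
    linarith
  linarith

/-- number of multiples of `d` in the class `b` up to `y` -/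
def cnt (b y d : ℕ) : ℕ := ((Finset.Icc 1 y).filter (fun k => k % 12 = b ∧ d ∣ k)).card

theorem tsum12_vonMangoldt (b y n : ℕ) (hyn : y ≤ n) :
    tsum12 b y = ∑ d ∈ Finset.Icc 1 n, ArithmeticFunction.vonMangoldt d * cnt b y d := by
  unfold tsum12 cnt
  have h1 : ∀ k ∈ (Finset.Icc 1 y).filter (fun k => k % 12 = b),
      Real.log k = ∑ d ∈ Finset.Icc 1 n,
        if d ∣ k then ArithmeticFunction.vonMangoldt d else 0 := by
    intro k hk
    simp only [Finset.mem_filter, Finset.mem_Icc] at hk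
    rw [← ArithmeticFunction.vonMangoldt_sum, ← Finset.sum_filter]
    refine Finset.sum_congr ?_ fun _ _ => rfl
    ext d
    simp only [Nat.mem_divisors, Finset.mem_filter, Finset.mem_Icc]
    constructor
    · rintro ⟨h, h0⟩
      have := Nat.le_of_dvd (by omega) h
      have := Nat.pos_of_dvd_of_pos h (by omega)
      exact ⟨by omega, h⟩
    · rintro ⟨_, h⟩
      exact ⟨h, by omega⟩
  rw [Finset.sum_congr rfl h1, Finset.sum_comm]
  refine Finset.sum_congr rfl fun d _ => ?_
  rw [← Finset.sum_filter, Finset.sum_const, Finset.filter_filter, nsmul_eq_mul, mul_comm]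

theorem cnt_coprime (b y d : ℕ) (hb : b = 1 ∨ b = 5 ∨ b = 7 ∨ b = 11)
    (hd : d % 12 = 1 ∨ d % 12 = 5 ∨ d % 12 = 7 ∨ d % 12 = 11) :
    cnt b y d = cls (b * (d % 12) % 12) (y / d) := by
  have hd0 : 0 < d := by omega
  rw [← card_class _ _ (by rcases hb with h | h | h | h <;> rcases hd with h' | h' | h' | h' <;>
      rw [h, h'] <;> norm_num) (by omega)]
  unfold cnt
  have key : ∀ l, (d * l) % 12 = b ↔ l % 12 = b * (d % 12) % 12 := by
    intro l
    rw [Nat.mul_mod]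
    have hl : l % 12 < 12 := Nat.mod_lt _ (by norm_num)
    generalize l % 12 = l' at *
    rcases hb with h | h | h | h <;> rcases hd with h' | h' | h' | h' <;> rw [h, h'] <;> omega
  symm
  apply Finset.card_bij (fun l _ => d * l)
  · intro l hl
    simp only [Finset.mem_filter, Finset.mem_Icc] at hl ⊢
    refine ⟨⟨Nat.mul_pos hd0 (by omega), ?_⟩, (key l).mpr hl.2, Dvd.intro _ rfl⟩
    rw [mul_comm]
    exact (Nat.le_div_iff_mul_le hd0).mp hl.1.2
  · intro i _ j _ h
    exact Nat.eq_of_mul_eq_mul_left hd0 h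
  · intro k hk
    simp only [Finset.mem_filter, Finset.mem_Icc] at hk
    obtain ⟨⟨h1, h2⟩, h3, l, rfl⟩ := hk
    refine ⟨l, ?_, rfl⟩
    simp only [Finset.mem_filter, Finset.mem_Icc]
    refine ⟨⟨Nat.pos_of_mul_pos_left h1 , ?_⟩, (key l).mp h3⟩
    rw [Nat.le_div_iff_mul_le hd0, mul_comm]
    exact h2

theorem cnt_not_coprime (b y d : ℕ) (hb : b = 1 ∨ b = 5 ∨ b = 7 ∨ b = 11)
    (hd : ¬ (d % 12 = 1 ∨ d % 12 = 5 ∨ d % 12 = 7 ∨ d % 12 = 11)) : cnt b y d = 0 := by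
  unfold cnt
  rw [Finset.card_eq_zero, Finset.filter_eq_empty_iff]
  rintro k _ ⟨h1, l, rfl⟩
  rw [Nat.mul_mod] at h1
  have hl : l % 12 < 12 := Nat.mod_lt _ (by norm_num)
  have hd' : d % 12 < 12 := Nat.mod_lt _ (by norm_num)
  generalize l % 12 = l' at *
  generalize d % 12 = d' at *
  interval_cases d' <;> omega

theorem cnt_ineq (a n d : ℕ) (ha : a = 1 ∨ a = 5 ∨ a = 7 ∨ a = 11) (hd : 1 ≤ d) (hdn : d ≤ n) :
    cnt a n d ≤ cnt (5 * a % 12) (n / 4) d + cnt (7 * a % 12) (n / 4) d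
      + cnt (11 * a % 12) (n / 4) d + cnt a (n / 12) d + cnt (5 * a % 12) (n / 12) d
      + cnt (7 * a % 12) (n / 12) d + (if d % 12 = a ∨ 41 * d ≤ n then 1 else 0) := by
  by_cases hc : d % 12 = 1 ∨ d % 12 = 5 ∨ d % 12 = 7 ∨ d % 12 = 11
  · have h5 : 5 * a % 12 = 1 ∨ 5 * a % 12 = 5 ∨ 5 * a % 12 = 7 ∨ 5 * a % 12 = 11 := by omega
    have h7 : 7 * a % 12 = 1 ∨ 7 * a % 12 = 5 ∨ 7 * a % 12 = 7 ∨ 7 * a % 12 = 11 := by omega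
    have h11 : 11 * a % 12 = 1 ∨ 11 * a % 12 = 5 ∨ 11 * a % 12 = 7 ∨ 11 * a % 12 = 11 := by omega
    rw [cnt_coprime _ _ _ ha hc, cnt_coprime _ _ _ h5 hc, cnt_coprime _ _ _ h7 hc,
      cnt_coprime _ _ _ h11 hc, cnt_coprime _ _ _ ha hc, cnt_coprime _ _ _ h5 hc,
      cnt_coprime _ _ _ h7 hc]
    have e : ∀ z, z * a % 12 * (d % 12) % 12 = z * (a * (d % 12) % 12) % 12 := by
      intro z
      generalize d % 12 = w
      rw [Nat.mod_mul_mod, mul_assoc, Nat.mul_mod z (a * w % 12), Nat.mod_mod, ← Nat.mul_mod]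
    have hG : a * (d % 12) % 12 = 1 ∨ a * (d % 12) % 12 = 5 ∨ a * (d % 12) % 12 = 7 ∨
        a * (d % 12) % 12 = 11 := by
      rcases ha with h | h | h | h <;> rcases hc with h' | h' | h' | h' <;> rw [h, h'] <;> norm_num
    have h1 : (a * (d % 12) % 12 = 1) ↔ d % 12 = a := by
      rcases ha with h | h | h | h <;> rcases hc with h' | h' | h' | h' <;> rw [h, h'] <;> norm_num
    have h2 : 41 ≤ n / d ↔ 41 * d ≤ n := Nat.le_div_iff_mul_le hd
    have k := key_ineq _ (n / d) hG (Nat.div_pos hdn hd)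
    simp only [h1, h2] at k
    rw [Nat.div_div_eq_div_mul, Nat.div_div_eq_div_mul, mul_comm d 4, mul_comm d 12,
      ← Nat.div_div_eq_div_mul, ← Nat.div_div_eq_div_mul] at k
    rw [e, e, e]
    exact k
  · rw [cnt_not_coprime _ _ _ ha hc]
    exact Nat.zero_le _

/-- the primes `p ≡ a (mod 12)` with `n / 41 < p ≤ n` -/
def classPrimes (a n : ℕ) : Finset ℕ :=
  (Finset.Icc 1 n).filter (fun p => p.Prime ∧ p % 12 = a ∧ n < 41 * p)

theorem comb_le (a n : ℕ) (ha : a = 1 ∨ a = 5 ∨ a = 7 ∨ a = 11) :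
    tsum12 a n - (tsum12 (5 * a % 12) (n / 4) + tsum12 (7 * a % 12) (n / 4)
      + tsum12 (11 * a % 12) (n / 4) + tsum12 a (n / 12) + tsum12 (5 * a % 12) (n / 12)
      + tsum12 (7 * a % 12) (n / 12)) ≤
    ∑ d ∈ Finset.Icc 1 n, ArithmeticFunction.vonMangoldt d *
      (if d % 12 = a ∨ 41 * d ≤ n then (1 : ℝ) else 0) := by
  have h4 : n / 4 ≤ n := Nat.div_le_self _ _
  have h12 : n / 12 ≤ n := Nat.div_le_self _ _
  rw [tsum12_vonMangoldt _ _ n le_rfl, tsum12_vonMangoldt _ _ n h4, tsum12_vonMangoldt _ _ n h4,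
    tsum12_vonMangoldt _ _ n h4, tsum12_vonMangoldt _ _ n h12, tsum12_vonMangoldt _ _ n h12,
    tsum12_vonMangoldt _ _ n h12, ← Finset.sum_add_distrib, ← Finset.sum_add_distrib,
    ← Finset.sum_add_distrib, ← Finset.sum_add_distrib, ← Finset.sum_add_distrib,
    ← Finset.sum_sub_distrib]
  refine Finset.sum_le_sum fun d hd => ?_
  rw [Finset.mem_Icc] at hd
  have h := cnt_ineq a n d ha hd.1 hd.2
  have h' : (cnt a n d : ℝ) ≤ cnt (5 * a % 12) (n / 4) d + cnt (7 * a % 12) (n / 4) d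
      + cnt (11 * a % 12) (n / 4) d + cnt a (n / 12) d + cnt (5 * a % 12) (n / 12) d
      + cnt (7 * a % 12) (n / 12) d + (if d % 12 = a ∨ 41 * d ≤ n then (1 : ℝ) else 0) := by
    have := (Nat.cast_le (α := ℝ)).mpr h
    push_cast at this
    exact this
  have h2 := mul_le_mul_of_nonneg_left h'
    (ArithmeticFunction.vonMangoldt_nonneg (n := d))
  linarith

theorem sum_ind_le (a n : ℕ) :
    ∑ d ∈ Finset.Icc 1 n, ArithmeticFunction.vonMangoldt d *
      (if d % 12 = a ∨ 41 * d ≤ n then (1 : ℝ) else 0) ≤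
    ∑ p ∈ classPrimes a n, Real.log p + Chebyshev.theta (n / 41)
      + (Chebyshev.psi n - Chebyshev.theta n) := by
  rw [Chebyshev.psi_sub_theta_eq_sum_not_prime, Chebyshev.theta, classPrimes, Nat.floor_natCast]
  have hfl : ⌊(n : ℝ) / 41⌋₊ = n / 41 := by
    have := Nat.floor_div_natCast (n : ℝ) 41
    simpa using this
  rw [hfl]
  have hI : ∀ m, Finset.Ioc 0 m = Finset.Icc 1 m := fun m => rfl
  rw [hI, hI]
  have hsub : (Finset.Icc 1 (n / 41)).filter (fun p => p.Prime) =
      (Finset.Icc 1 n).filter (fun p => p.Prime ∧ 41 * p ≤ n) := by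
    ext p
    simp only [Finset.mem_filter, Finset.mem_Icc]
    constructor
    · rintro ⟨⟨h1, h2⟩, h3⟩; exact ⟨by omega, h3, by omega⟩
    · rintro ⟨⟨h1, h2⟩, h3, h4⟩; exact ⟨by omega, h3⟩
  rw [hsub, Finset.sum_filter, Finset.sum_filter, Finset.sum_filter, ← Finset.sum_add_distrib,
    ← Finset.sum_add_distrib]
  refine Finset.sum_le_sum fun d _ => ?_
  have h0 := ArithmeticFunction.vonMangoldt_nonneg (n := d)
  by_cases hp : d.Prime
  · rw [ArithmeticFunction.vonMangoldt_apply_prime hp] at h0 ⊢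
    by_cases h1 : d % 12 = a <;> by_cases h2 : 41 * d ≤ n
    · simp [hp, h1, h2, not_lt.mpr h2]
    · simp [hp, h1, h2, not_le.mp h2]
    · simp [hp, h1, h2]
    · simp [hp, h1, h2]
  · by_cases h1 : d % 12 = a ∨ 41 * d ≤ n
    · simp [hp, h1]
    · simp [hp, h1, h0]

theorem classPrimes_lower (a n : ℕ) (ha : a = 1 ∨ a = 5 ∨ a = 7 ∨ a = 11) (hn : 100 ≤ n) :
    (n : ℝ) * (3 / 4 * Real.log 4 + 1 / 4 * Real.log 12) / 12 - 7 * Real.log n - 1 / 2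
      - Real.log 4 * (n / 41) - 2 * √(n : ℝ) * Real.log n ≤ ∑ p ∈ classPrimes a n, Real.log p := by
  have hn1 : (100 : ℝ) ≤ n := by exact_mod_cast hn
  have h1 := comb_le a n ha
  have h2 := sum_ind_le a n
  have h3 := Chebyshev.theta_le_log4_mul_x (x := (n : ℝ) / 41) (by positivity)
  have h4 := Chebyshev.psi_sub_theta_le (x := (n : ℝ)) (by linarith)
  have l0 := tsum12_lower a n (by omega) (by omega) (by omega)
  have c4 : ((n / 4 : ℕ) : ℝ) ≤ (n : ℝ) / 4 := by
    have := Nat.cast_div_le (α := ℝ) (m := n) (n := 4)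
    simpa using this
  have c12 : ((n / 12 : ℕ) : ℝ) ≤ (n : ℝ) / 12 := by
    have := Nat.cast_div_le (α := ℝ) (m := n) (n := 12)
    simpa using this
  have u1 := tsum12_upper (5 * a % 12) (n / 4) (n / 4) (by omega) (by omega) c4 (by linarith)
  have u2 := tsum12_upper (7 * a % 12) (n / 4) (n / 4) (by omega) (by omega) c4 (by linarith)
  have u3 := tsum12_upper (11 * a % 12) (n / 4) (n / 4) (by omega) (by omega) c4 (by linarith)
  have u4 := tsum12_upper a (n / 12) (n / 12) (by omega) (by omega) c12 (by linarith)
  have u5 := tsum12_upper (5 * a % 12) (n / 12) (n / 12) (by omega) (by omega) c12 (by linarith)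
  have u6 := tsum12_upper (7 * a % 12) (n / 12) (n / 12) (by omega) (by omega) c12 (by linarith)
  have L4 : Real.log ((n : ℝ) / 4 + 12) ≤ Real.log n :=
    Real.log_le_log (by linarith) (by linarith)
  have L12 : Real.log ((n : ℝ) / 12 + 12) ≤ Real.log n :=
    Real.log_le_log (by linarith) (by linarith)
  have g4 : gfun ((n : ℝ) / 4) = n / 4 * (Real.log n - Real.log 4) - n / 4 := by
    unfold gfun
    rw [Real.log_div (by linarith) (by norm_num)]
  have g12 : gfun ((n : ℝ) / 12) = n / 12 * (Real.log n - Real.log 12) - n / 12 := by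
    unfold gfun
    rw [Real.log_div (by linarith) (by norm_num)]
  have g1 : gfun (n : ℝ) = n * Real.log n - n := rfl
  rw [g4] at u1 u2 u3
  rw [g12] at u4 u5 u6
  rw [g1] at l0
  linarith

/-! ### Summing over the squares of primes -/

/-- the logarithmic weight of a prime `q` -/
noncomputable def wt (t : ℝ) : ℝ :=
  Real.log 12 + Real.log 2 + Real.log 3 / 2 + 9 / 4 * Real.log t

theorem log_le_of_pow (q k l : ℕ) (hk : 0 < k) (hq : 0 < q) (h : q ^ k ≤ 2 ^ l) :
    Real.log q ≤ l / k * Real.log 2 := by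
  have hq' : (0 : ℝ) < q := by exact_mod_cast hq
  have hk' : (0 : ℝ) < k := by exact_mod_cast hk
  have h1 : ((q : ℝ) ^ k) ≤ 2 ^ l := by exact_mod_cast h
  have h2 := Real.log_le_log (by positivity) h1
  rw [Real.log_pow, Real.log_pow] at h2
  rw [div_mul_eq_mul_div, le_div_iff₀ hk']
  linarith

theorem le_log_of_pow (q k l : ℕ) (hk : 0 < k) (h : 2 ^ l ≤ q ^ k) :
    l / k * Real.log 2 ≤ Real.log q := by
  have hk' : (0 : ℝ) < k := by exact_mod_cast hk
  have h1 : (2 : ℝ) ^ l ≤ (q : ℝ) ^ k := by exact_mod_cast h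
  have h2 := Real.log_le_log (by positivity) h1
  rw [Real.log_pow, Real.log_pow] at h2
  rw [div_mul_eq_mul_div, div_le_iff₀ hk']
  linarith

theorem log_three_le : Real.log 3 ≤ 8 / 5 * Real.log 2 := by
  have := log_le_of_pow 3 5 8 (by norm_num) (by norm_num) (by norm_num)
  exact_mod_cast this

theorem log_three_ge : 19 / 12 * Real.log 2 ≤ Real.log 3 := by
  have := le_log_of_pow 3 12 19 (by norm_num) (by norm_num)
  exact_mod_cast this

theorem log_four_eq : Real.log 4 = 2 * Real.log 2 := by
  rw [show (4 : ℝ) = 2 ^ 2 by norm_num, Real.log_pow]; norm_num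

theorem log_twelve_eq : Real.log 12 = 2 * Real.log 2 + Real.log 3 := by
  rw [show (12 : ℝ) = 2 ^ 2 * 3 by norm_num, Real.log_mul (by norm_num) (by norm_num),
    Real.log_pow]; norm_num

theorem wt_const_le : Real.log 12 + Real.log 2 + Real.log 3 / 2 ≤ 27 / 5 * Real.log 2 := by
  rw [log_twelve_eq]
  linarith [log_three_le]

theorem wt_const_ge : 3 ≤ Real.log 12 + Real.log 2 + Real.log 3 / 2 := by
  rw [log_twelve_eq]
  linarith [log_three_ge, Real.log_two_gt_d9]

theorem wt_nonneg (t : ℝ) (ht : 1 ≤ t) : 0 ≤ wt t := by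
  unfold wt
  linarith [wt_const_ge, Real.log_nonneg ht]

noncomputable def htail (t : ℝ) : ℝ := (wt t + 9 / 4) / t

theorem tail_step (t : ℝ) (ht : 10 ≤ t) : wt t / t ^ 2 ≤ (htail (t - 2) - htail t) / 2 := by
  have hc := wt_const_ge
  have hl : 0 ≤ Real.log t := Real.log_nonneg (by linarith)
  have hu : 0 < t - 2 := by linarith
  have ht0 : 0 < t := by linarith
  have h := Real.log_le_sub_one_of_pos (x := t / (t - 2)) (by positivity)
  rw [Real.log_div (by positivity) (by positivity)] at h
  have e : t / (t - 2) - 1 = 2 / (t - 2) := by field_simp; ring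
  rw [e] at h
  have hw : 3 ≤ wt t := by unfold wt; linarith
  have h1 : wt t - 9 / 2 / (t - 2) ≤ wt (t - 2) := by
    unfold wt
    have : (9 / 2 : ℝ) / (t - 2) = 9 / 4 * (2 / (t - 2)) := by ring
    rw [this]; linarith
  have h2 : (wt t - 9 / 2 / (t - 2) + 9 / 4) / (t - 2) ≤ htail (t - 2) := by
    unfold htail
    gcongr
  have h3 : wt t / t ^ 2 ≤
      ((wt t - 9 / 2 / (t - 2) + 9 / 4) / (t - 2) - (wt t + 9 / 4) / t) / 2 := by
    have key : ((wt t - 9 / 2 / (t - 2) + 9 / 4) / (t - 2) - (wt t + 9 / 4) / t) / 2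
        - wt t / t ^ 2 = (2 * wt t * (t - 2) - 9 / 2 * t) / (t ^ 2 * (t - 2) ^ 2) := by
      field_simp
      ring
    have : 0 ≤ (2 * wt t * (t - 2) - 9 / 2 * t) / (t ^ 2 * (t - 2) ^ 2) := by
      apply div_nonneg _ (by positivity)
      nlinarith
    linarith
  have h4 : htail t = (wt t + 9 / 4) / t := rfl
  rw [h4]
  linarith

theorem tail_sum (K : ℕ) :
    ∑ i ∈ Finset.range K, wt (53 + 2 * i) / (53 + 2 * (i : ℝ)) ^ 2 ≤
      (htail 51 - htail (51 + 2 * K)) / 2 := by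
  induction K with
  | zero => simp
  | succ K ih =>
    rw [Finset.sum_range_succ]
    have h := tail_step (53 + 2 * K) (by have : (0 : ℝ) ≤ K := by positivity
                                         linarith)
    have e1 : (53 : ℝ) + 2 * K - 2 = 51 + 2 * K := by ring
    have e2 : (51 : ℝ) + 2 * ((K + 1 : ℕ) : ℝ) = 53 + 2 * K := by push_cast; ring
    rw [e1] at h
    rw [e2]
    linarith

theorem tail_bound (K : ℕ) :
    ∑ i ∈ Finset.range K, wt (53 + 2 * i) / (53 + 2 * (i : ℝ)) ^ 2 ≤ 147 / 1000 := by
  refine (tail_sum K).trans ?_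
  have h0 : 0 ≤ htail (51 + 2 * K) := by
    unfold htail
    have hk : (0 : ℝ) ≤ K := by positivity
    have := wt_nonneg (51 + 2 * K) (by linarith)
    positivity
  have h1 : htail 51 ≤ 294 / 1000 := by
    unfold htail wt
    have hl := log_le_of_pow 51 4 23 (by norm_num) (by norm_num) (by norm_num)
    push_cast at hl
    rw [div_le_iff₀ (by norm_num)]
    linarith [wt_const_le, Real.log_two_lt_d9]
  linarith

def headPrimes : Finset ℕ := {5, 7, 11, 13, 17, 19, 23, 29, 31, 37, 41, 43, 47}

theorem head_term (q l : ℕ) (hq : 0 < q) (h : q ^ 6 ≤ 2 ^ l) :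
    wt q / (q : ℝ) ^ 2 ≤ (27 / 5 + 3 / 8 * l) / (q : ℝ) ^ 2 * Real.log 2 := by
  have hq' : (0 : ℝ) < q := by exact_mod_cast hq
  have hl := log_le_of_pow q 6 l (by norm_num) hq h
  push_cast at hl
  rw [div_mul_eq_mul_div]
  apply div_le_div_of_nonneg_right _ (by positivity)
  unfold wt
  linarith [wt_const_le]

theorem head_bound : ∑ q ∈ headPrimes, wt q / (q : ℝ) ^ 2 ≤ 743 / 1000 := by
  unfold headPrimes
  repeat rw [Finset.sum_insert (by decide)]
  rw [Finset.sum_singleton]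
  have h5 := head_term 5 14 (by norm_num) (by norm_num)
  have h7 := head_term 7 17 (by norm_num) (by norm_num)
  have h11 := head_term 11 21 (by norm_num) (by norm_num)
  have h13 := head_term 13 23 (by norm_num) (by norm_num)
  have h17 := head_term 17 25 (by norm_num) (by norm_num)
  have h19 := head_term 19 26 (by norm_num) (by norm_num)
  have h23 := head_term 23 28 (by norm_num) (by norm_num)
  have h29 := head_term 29 30 (by norm_num) (by norm_num)
  have h31 := head_term 31 30 (by norm_num) (by norm_num)
  have h37 := head_term 37 32 (by norm_num) (by norm_num)
  have h41 := head_term 41 33 (by norm_num) (by norm_num)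
  have h43 := head_term 43 33 (by norm_num) (by norm_num)
  have h47 := head_term 47 34 (by norm_num) (by norm_num)
  norm_num at *
  linarith [Real.log_two_lt_d9, Real.log_two_gt_d9]

theorem square_sum (s : ℕ) :
    ∑ q ∈ (Finset.Icc 5 s).filter Nat.Prime, wt q / (q : ℝ) ^ 2 ≤ 89 / 100 := by
  have hnn : ∀ q : ℕ, 1 ≤ q → 0 ≤ wt q / (q : ℝ) ^ 2 := fun q hq =>
    div_nonneg (wt_nonneg q (by exact_mod_cast hq)) (by positivity)
  set Tl := (Finset.range s).image (fun i => 53 + 2 * i) with hT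
  have hsub : (Finset.Icc 5 s).filter Nat.Prime ⊆ headPrimes ∪ Tl := by
    intro q hq
    simp only [Finset.mem_filter, Finset.mem_Icc] at hq
    obtain ⟨⟨h5, hs⟩, hp⟩ := hq
    rw [Finset.mem_union]
    rcases lt_or_ge q 53 with h | h
    · left
      clear hT hs hnn
      unfold headPrimes
      interval_cases q <;> first | decide | (exfalso; revert hp; norm_num)
    · right
      rw [hT, Finset.mem_image]
      have hodd : q % 2 = 1 := by
        rcases hp.eq_two_or_odd with h2 | h2
        · omega
        · exact h2
      exact ⟨(q - 53) / 2, by rw [Finset.mem_range]; omega, by omega⟩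
  have hdis : Disjoint headPrimes Tl := by
    rw [Finset.disjoint_left]
    intro q h1 h2
    rw [hT, Finset.mem_image] at h2
    obtain ⟨i, _, rfl⟩ := h2
    have : ∀ q ∈ headPrimes, q < 53 := by decide
    have := this _ h1
    omega
  have h1 : ∑ q ∈ (Finset.Icc 5 s).filter Nat.Prime, wt q / (q : ℝ) ^ 2 ≤
      ∑ q ∈ headPrimes ∪ Tl, wt q / (q : ℝ) ^ 2 := by
    refine Finset.sum_le_sum_of_subset_of_nonneg hsub fun q hq _ => hnn q ?_
    rw [Finset.mem_union] at hq
    rcases hq with hq | hq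
    · have : ∀ q ∈ headPrimes, 1 ≤ q := by decide
      exact this q hq
    · rw [hT, Finset.mem_image] at hq
      obtain ⟨i, _, rfl⟩ := hq
      omega
  rw [Finset.sum_union hdis] at h1
  have h2 : ∑ q ∈ Tl, wt q / (q : ℝ) ^ 2 ≤ 147 / 1000 := by
    rw [hT, Finset.sum_image]
    · refine le_trans (le_of_eq ?_) (tail_bound s)
      refine Finset.sum_congr rfl fun i _ => ?_
      push_cast
      rfl
    · intro i _ j _ h
      simpa using h
  linarith [head_bound]
lemma per_q_bound (a n q : ℕ) (ha : a = 1 ∨ a = 5 ∨ a = 7 ∨ a = 11) (hn : 4194304 ≤ n)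
    (hq : q.Prime) (h5 : 5 ≤ q) :
    ∑ p ∈ (classPrimes a n).filter (fun p => q ^ 2 ∣ n - p), Real.log p
      ≤ ((n : ℝ) / (12 * (q : ℝ) ^ 2) + 1) * wt q := by
  have hcop : Nat.Coprime 12 (q ^ 2) := by
    apply Nat.Coprime.pow_right
    apply Nat.Coprime.symm
    rw [Nat.Prime.coprime_iff_not_dvd hq]
    intro hd
    have hle := Nat.le_of_dvd (by norm_num) hd
    interval_cases q <;> revert hd <;> revert hq <;> norm_num
  obtain ⟨k, hk1, hk2⟩ := Nat.chineseRemainder hcop a n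
  have hmpos : 0 < 12 * q ^ 2 := by positivity
  have hq25 : 25 ≤ q ^ 2 := by nlinarith
  set m := 12 * q ^ 2 with hm
  have hr12 : (k % m) % 12 = a := by
    rw [hm, Nat.mod_mul_right_mod]
    have : k % 12 = a % 12 := hk1
    rcases ha with rfl | rfl | rfl | rfl <;> simpa using this
  have hr0 : 0 < k % m := by
    rcases Nat.eq_zero_or_pos (k % m) with h | h
    · rw [h] at hr12; omega
    · exact h
  have hJ : n / m ≤ n / 300 := Nat.div_le_div_left (by omega) (by norm_num)
  have key := class_prod_bound q (k % m) (n / m + 1) hq h5 hr0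
    (Nat.mod_lt _ hmpos).le ((classPrimes a n).filter (fun p => q ^ 2 ∣ n - p)) ?_ ?_ ?_
  · refine key.trans ?_
    have h1 : ((n / m + 1 : ℕ) : ℝ) ≤ (n : ℝ) / (12 * (q : ℝ) ^ 2) + 1 := by
      push_cast
      have := @Nat.cast_div_le ℝ _ _ _ n m
      have hmc : (m : ℝ) = 12 * (q : ℝ) ^ 2 := by rw [hm]; push_cast; ring
      rw [hmc] at this
      linarith
    have hw : 0 ≤ wt q := wt_nonneg _ (by exact_mod_cast (by omega : 1 ≤ q))
    exact mul_le_mul_of_nonneg_right h1 hw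
  · intro p hp
    simp only [classPrimes, Finset.mem_filter] at hp
    exact hp.1.2.1
  · intro p hp
    simp only [classPrimes, Finset.mem_filter] at hp
    have := hp.1.2.2.2
    omega
  · intro p hp
    simp only [classPrimes, Finset.mem_filter, Finset.mem_Icc] at hp
    obtain ⟨⟨⟨_, hpn⟩, _, hpa, _⟩, hd⟩ := hp
    refine ⟨p / m, Nat.lt_succ_of_le (Nat.div_le_div_right hpn), ?_⟩
    have e1 : p ≡ k [MOD 12] := by
      have : p ≡ a [MOD 12] := by
        unfold Nat.ModEq
        rw [hpa]
        rcases ha with rfl | rfl | rfl | rfl <;> rfl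
      exact this.trans hk1.symm
    have e2 : p ≡ k [MOD q ^ 2] := ((Nat.modEq_iff_dvd' hpn).2 hd).trans hk2.symm
    have e3 : p ≡ k [MOD m] := (Nat.modEq_and_modEq_iff_modEq_mul hcop).1 ⟨e1, e2⟩
    have e4 : p % m = k % m := e3
    have := Nat.mod_add_div p m
    rw [← e4, ← hm]
    linarith [Nat.mul_comm m (p / m)]

lemma wt_sum (n : ℕ) (hn : 4194304 ≤ n) :
    ∑ q ∈ (Finset.Icc 5 (Nat.sqrt n)).filter Nat.Prime, wt q
      ≤ √(n : ℝ) * (27 / 5 * Real.log 2 + 9 / 8 * Real.log n) := by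
  have hl2 : 0 < Real.log 2 := Real.log_pos (by norm_num)
  have hln : 0 ≤ Real.log n := Real.log_nonneg (by exact_mod_cast (by omega : 1 ≤ n))
  have h1 : ∀ q ∈ (Finset.Icc 5 (Nat.sqrt n)).filter Nat.Prime,
      wt q ≤ 27 / 5 * Real.log 2 + 9 / 8 * Real.log n := by
    intro q hq
    simp only [Finset.mem_filter, Finset.mem_Icc] at hq
    have hqn : q ^ 2 ≤ n := by
      have := Nat.le_sqrt.1 hq.1.2
      nlinarith
    have h2 : Real.log ((q : ℝ) ^ 2) ≤ Real.log n := by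
      apply Real.log_le_log
      · have : (0:ℝ) < q := by exact_mod_cast (by omega : 0 < q)
        positivity
      · exact_mod_cast hqn
    rw [Real.log_pow] at h2
    push_cast at h2
    have := wt_const_le
    unfold wt
    linarith
  refine (Finset.sum_le_card_nsmul _ _ _ h1).trans ?_
  rw [nsmul_eq_mul]
  apply mul_le_mul_of_nonneg_right _ (by positivity)
  have hc : ((Finset.Icc 5 (Nat.sqrt n)).filter Nat.Prime).card ≤ Nat.sqrt n := by
    refine (Finset.card_filter_le _ _).trans ?_
    rw [Nat.card_Icc]; omega
  calc _ ≤ ((Nat.sqrt n : ℕ) : ℝ) := by exact_mod_cast hc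
    _ ≤ _ := Real.nat_sqrt_le_real_sqrt

lemma numerics (n : ℕ) (hn : 4194304 ≤ n) :
    (n : ℝ) / 12 * (89 / 100) + √(n : ℝ) * (27 / 5 * Real.log 2 + 9 / 8 * Real.log n)
    < (n:ℝ) * (3/4 * Real.log 4 + 1/4 * Real.log 12) / 12 - 7 * Real.log n - 1/2
      - Real.log 4 * (n/41) - 2 * √(n:ℝ) * Real.log n := by
  have hnr : (4194304 : ℝ) ≤ n := by exact_mod_cast hn
  set s := √(n : ℝ) with hs
  have hs2 : (n : ℝ) = s ^ 2 := by rw [hs, Real.sq_sqrt (by positivity)]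
  have hs1 : 2048 ≤ s := by
    rw [hs]; apply Real.le_sqrt_of_sq_le; linarith
  have hlog : Real.log s ≤ 11 * Real.log 2 + s / 2048 - 1 := by
    have h1 := Real.log_le_sub_one_of_pos (show 0 < s / 2048 by positivity)
    rw [Real.log_div (by positivity) (by norm_num),
      show (2048 : ℝ) = 2 ^ 11 by norm_num, Real.log_pow] at h1
    push_cast at h1
    norm_num at h1 ⊢
    linarith
  have g1 := Real.log_two_gt_d9
  have g2 := Real.log_two_lt_d9
  have g3 := log_three_ge
  rw [log_four_eq, log_twelve_eq]
  have hln : Real.log n = 2 * Real.log s := by rw [hs2, Real.log_pow]; push_cast; ring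
  rw [hln, hs2]
  set L := Real.log s
  have hL : L ≤ 0.003724 * s := by linarith
  have hsL : s * L ≤ 0.003724 * s ^ 2 := by nlinarith
  have hss : 2048 * s ≤ s ^ 2 := by nlinarith
  have hs2L : s * Real.log 2 ≤ 0.6931471808 * s := by nlinarith
  have a1 : 0.6931471803 * s ^ 2 ≤ s ^ 2 * Real.log 2 := by nlinarith [sq_nonneg s]
  have a2 : 19 / 12 * (s ^ 2 * Real.log 2) ≤ s ^ 2 * Real.log 3 := by nlinarith [sq_nonneg s]
  nlinarith

lemma large_case (n : ℕ) (hn : 4194304 ≤ n) :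
    ∃ p k : ℕ, p.Prime ∧ Squarefree k ∧ n = p + k := by
  by_contra hcon
  obtain ⟨a, ha, ha3, ha4⟩ : ∃ a, (a = 1 ∨ a = 5 ∨ a = 7 ∨ a = 11) ∧ a % 3 ≠ n % 3 ∧
      a % 4 ≠ n % 4 := by
    by_cases h3 : n % 3 = 1 <;> by_cases h4 : n % 4 = 1
    · exact ⟨11, by omega, by omega, by omega⟩
    · exact ⟨5, by omega, by omega, by omega⟩
    · exact ⟨7, by omega, by omega, by omega⟩
    · exact ⟨1, by omega, by omega, by omega⟩
  set Q := (Finset.Icc 5 (Nat.sqrt n)).filter Nat.Prime with hQ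
  have hcover : ∀ p ∈ classPrimes a n, ∃ q ∈ Q, q ^ 2 ∣ n - p := by
    intro p hp
    simp only [classPrimes, Finset.mem_filter, Finset.mem_Icc] at hp
    obtain ⟨⟨_, hpn⟩, hpp, hpa, _⟩ := hp
    rcases hpn.eq_or_lt with h | h
    · refine ⟨5, ?_, by rw [h]; simp⟩
      rw [hQ, Finset.mem_filter, Finset.mem_Icc]
      exact ⟨⟨le_refl _, Nat.le_sqrt.2 (by omega)⟩, by norm_num⟩
    · have hns : ¬ Squarefree (n - p) := fun hsq => hcon ⟨p, n - p, hpp, hsq, by omega⟩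
      rw [Nat.squarefree_iff_prime_squarefree] at hns
      push Not at hns
      obtain ⟨q, hq, hd⟩ := hns
      have hle : q * q ≤ n - p := Nat.le_of_dvd (by omega) hd
      have hq5 : 5 ≤ q := by
        by_contra hlt
        push Not at hlt
        interval_cases q
        · exact absurd hq (by norm_num)
        · exact absurd hq (by norm_num)
        · omega
        · omega
        · exact absurd hq (by norm_num)
      refine ⟨q, ?_, by rw [pow_two]; exact hd⟩
      rw [hQ, Finset.mem_filter, Finset.mem_Icc]
      exact ⟨⟨hq5, Nat.le_sqrt.2 (by omega)⟩, hq⟩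
  have hlognn : ∀ p : ℕ, 0 ≤ Real.log p := fun p => Real.log_natCast_nonneg p
  have hup : ∑ p ∈ classPrimes a n, Real.log p
      ≤ ∑ q ∈ Q, ∑ p ∈ (classPrimes a n).filter (fun p => q ^ 2 ∣ n - p), Real.log p := by
    simp_rw [Finset.sum_filter]
    rw [Finset.sum_comm]
    apply Finset.sum_le_sum
    intro p hp
    obtain ⟨q, hq, hd⟩ := hcover p hp
    have := Finset.single_le_sum (f := fun q => if q ^ 2 ∣ n - p then Real.log p else 0)
      (s := Q) (fun i _ => by
        split_ifs
        · exact hlognn p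
        · exact le_refl _) hq
    simpa only [hd, if_true] using this
  have hup2 : ∑ q ∈ Q, ∑ p ∈ (classPrimes a n).filter (fun p => q ^ 2 ∣ n - p), Real.log p
      ≤ ∑ q ∈ Q, ((n : ℝ) / 12 * (wt q / (q : ℝ) ^ 2) + wt q) := by
    apply Finset.sum_le_sum
    intro q hq
    rw [hQ, Finset.mem_filter, Finset.mem_Icc] at hq
    refine (per_q_bound a n q ha hn hq.2 hq.1.1).trans (le_of_eq ?_)
    have : (q : ℝ) ≠ 0 := by exact_mod_cast hq.2.ne_zero
    field_simp
  rw [Finset.sum_add_distrib, ← Finset.mul_sum] at hup2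
  have h1 := square_sum (Nat.sqrt n)
  have h2 := wt_sum n hn
  have h3 := classPrimes_lower a n ha (by omega)
  have h4 := numerics n hn
  have h5 := mul_le_mul_of_nonneg_left h1 (show (0:ℝ) ≤ (n : ℝ) / 12 by positivity)
  linarith

/-- Every integer greater than two can be written as the sum of a prime and a
square-free number. -/
theorem prime_add_squarefree (n : ℕ) (hn : 2 < n) :
    ∃ p k : ℕ, p.Prime ∧ Squarefree k ∧ n = p + k := by
  rcases lt_or_ge n 4194304 with h | h
  · exact small_case n hn h
  · exact large_case n h
end

section
/- Every integer greater than four can be written as the sum of two primes and a square-free number. -/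
/-! ## Finite verification -/

def IsRep (n : ℕ) : Prop :=
  ∃ p q k : ℕ, p.Prime ∧ q.Prime ∧ Squarefree k ∧ n = p + q + k

/-- The product of the primes up to 2000. -/
def bigP : ℕ :=
  289374641962945601852615669686352438557198389101635505921978687533534603184099103356713220245045689382193979028466556623300928386426868641265517885761774500699854169800840685305650571905326393891147443503522793860584071591452879655775734323993447280229950516208168456242859704539545043029470723016883062129865188983307445759944131787563777752236534042838736571825768147309875879568648761848492474692269075737993820510968847059797750137738579680583507041487685017149524627916063644375086068999495298981349776540320796738483271972712449573928869390146878678278551706732964746955815021418849063826580384371871911662113251288424597019051505811657455462629184223235168202635751562718522606516698622396025118884934399326179006093117580004591816199377853876305166538715269486496913965338299018641563718412655206993166415109405802877992948356769154670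

/-- The product of the primes up to 100. -/
def bigQ : ℕ := 2305567963945518424753102147331756070

def allGcd : ℕ → Bool
  | 0 => true
  | f + 1 => (Nat.gcd (f + 2) bigP != 1) && allGcd f

theorem allGcd_spec (f : ℕ) (h : allGcd f = true) :
    ∀ j, 2 ≤ j → j ≤ f + 1 → Nat.gcd j bigP ≠ 1 := by
  induction f with
  | zero => intro j h1 h2; omega
  | succ f ih =>
    simp only [allGcd, Bool.and_eq_true, bne_iff_ne, ne_eq] at h
    intro j h1 h2
    rcases Nat.lt_or_ge j (f + 2) with h4 | h4
    · exact ih h.2 j h1 (by omega)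
    · have : j = f + 2 := by omega
      subst this
      exact h.1

set_option maxRecDepth 100000 in
theorem allGcd_check : allGcd 2000 = true := by decide +kernel

def isP (q : ℕ) : Bool :=
  Nat.beq q 2 || (Nat.blt 2000 q && (Nat.blt q 4004001 && Nat.beq (Nat.gcd q bigP) 1))

theorem isP_spec (q : ℕ) (h : isP q = true) : q.Prime := by
  simp only [isP, Bool.or_eq_true, Bool.and_eq_true, Nat.beq_eq, Nat.blt_eq] at h
  rcases h with rfl | ⟨h1, h2, h3⟩
  · exact Nat.prime_two
  by_contra hq
  have h4 : q.minFac ^ 2 ≤ q := Nat.minFac_sq_le_self (by omega) hq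
  have h5 : q.minFac < 2001 := by nlinarith
  have hp : q.minFac.Prime := Nat.minFac_prime (by omega)
  have h6 := allGcd_spec 2000 allGcd_check q.minFac hp.two_le (by omega)
  exact h6 (Nat.Coprime.coprime_dvd_left (Nat.minFac_dvd q) h3)

def isSF (k : ℕ) : Bool :=
  Nat.ble 1 k && Nat.beq (Nat.gcd (k / Nat.gcd k bigQ) bigQ) 1

theorem isSF_spec (k : ℕ) (hk : k ≤ 10000) (h : isSF k = true) : Squarefree k := by
  simp only [isSF, Bool.and_eq_true, Nat.ble_eq, Nat.beq_eq] at h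
  obtain ⟨h1, h2⟩ := h
  rw [Nat.squarefree_iff_prime_squarefree]
  intro p hp hd
  have h3 : p * p ≤ k := Nat.le_of_dvd h1 hd
  have h4 : p ≤ 100 := by nlinarith
  have h5 : ∀ p ≤ 100, 2 ≤ p → Nat.gcd p bigQ ≠ 1 ∧ bigQ % (p * p) ≠ 0 := by decide +kernel
  obtain ⟨h6, h7⟩ := h5 p h4 hp.two_le
  have h8 : p ∣ bigQ := by
    by_contra hc
    exact h6 ((Nat.Prime.coprime_iff_not_dvd hp).2 hc)
  have h9 : ¬ p ∣ k / Nat.gcd k bigQ := by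
    intro hc
    have := Nat.dvd_gcd hc h8
    rw [h2] at this
    exact hp.one_lt.ne' (Nat.dvd_one.1 this)
  have h10 : Nat.Coprime (p * p) (k / Nat.gcd k bigQ) := by
    have := (Nat.Prime.coprime_iff_not_dvd hp).2 h9
    exact Nat.Coprime.mul_left this this
  have h11 : p * p ∣ Nat.gcd k bigQ := by
    refine h10.dvd_of_dvd_mul_left ?_
    rwa [Nat.div_mul_cancel (Nat.gcd_dvd_left _ _)]
  exact h7 (Nat.mod_eq_zero_of_dvd (h11.trans (Nat.gcd_dvd_right _ _)))

def isPS (t : ℕ) : Bool :=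
  [2, 3, 5, 7, 11, 13, 17, 19, 23].any (fun p => Nat.ble p t && isSF (t - p))

def allPS : ℕ → Bool
  | 0 => true
  | f + 1 => isPS (f + 3) && allPS f

theorem allPS_spec (f : ℕ) (h : allPS f = true) : ∀ t, 3 ≤ t → t < f + 3 → isPS t = true := by
  induction f with
  | zero => intro j h1 h2; omega
  | succ f ih =>
    simp only [allPS, Bool.and_eq_true] at h
    intro j h1 h2
    rcases Nat.lt_or_ge j (f + 3) with h4 | h4
    · exact ih h.2 j h1 h4
    · have : j = f + 3 := by omega
      subst this
      exact h.1

set_option maxRecDepth 100000 in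
theorem allPS_check : allPS 9998 = true := by decide +kernel

theorem ps (t : ℕ) (h1 : 3 ≤ t) (h2 : t ≤ 10000) :
    ∃ p k : ℕ, p.Prime ∧ Squarefree k ∧ t = p + k := by
  have h := allPS_spec 9998 allPS_check t h1 (by omega)
  simp only [isPS, List.any_eq_true, Bool.and_eq_true, Nat.ble_eq] at h
  obtain ⟨p, hp, hpt, hs⟩ := h
  refine ⟨p, t - p, ?_, isSF_spec _ (by omega) hs, by omega⟩
  have : ∀ p ∈ [2, 3, 5, 7, 11, 13, 17, 19, 23], p.Prime := by decide
  exact this p hp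

def chainOK : List ℕ → ℕ → ℕ → Bool
  | [], N, X => Nat.ble X N
  | q :: L, N, X => isP q && (Nat.ble (q + 2) N && chainOK L (q + 10000) X)

theorem chainOK_spec (L : List ℕ) (N X : ℕ) (h : chainOK L N X = true)
    (hN : ∀ n, 4 < n → n ≤ N → IsRep n) : ∀ n, 4 < n → n ≤ X → IsRep n := by
  induction L generalizing N with
  | nil =>
    simp only [chainOK, Nat.ble_eq] at h
    exact fun n h1 h2 => hN n h1 (by omega)
  | cons q L ih =>
    simp only [chainOK, Bool.and_eq_true, Nat.ble_eq] at h
    obtain ⟨h1, h2, h3⟩ := h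
    refine ih _ h3 ?_
    intro n hn hn2
    rcases Nat.lt_or_ge N n with h4 | h4
    · obtain ⟨p, k, hp, hk, he⟩ := ps (n - q) (by omega) (by omega)
      exact ⟨p, q, k, hp, isP_spec q h1, hk, by omega⟩
    · exact hN n hn h4

def sfChain : List ℕ := [
  2, 9973, 19963, 29959, 39953, 49943, 59929, 69911, 79907, 89899, 99881, 109873, 119869, 129853,
  139837, 149827, 159811, 169789, 179779, 189767, 199753, 209743, 219731, 229727, 239713, 249703,
  259697, 269683, 279679, 289669, 299653, 309637, 319607, 329603, 339601, 349589, 359587, 369581,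
  379579, 389569, 399557, 409543, 419537, 429529, 439519, 449473, 459469, 469457, 479441, 489439,
  499423, 509417, 519413, 529411, 539401, 549391, 559369, 569323, 579311, 589297, 599281, 609277,
  619273, 629263, 639259, 649217, 659189, 669181, 679171, 689167, 699157, 709153, 719149, 729143,
  739121, 749093, 759089, 769081, 779069, 789067, 799063, 809051, 819037, 829013, 839009, 848993,
  858989, 868957, 878953, 888931, 898927, 908911, 918899, 928883, 938881, 948877, 958871, 968857,
  978853, 988849, 998843, 1008829, 1018817, 1028809, 1038803, 1048799, 1058791, 1068779, 1078757,
  1088753, 1098737, 1108733, 1118723, 1128719, 1138717, 1148713, 1158683, 1168639, 1178633,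
  1188619, 1198609, 1208591, 1218583, 1228571, 1238551, 1248539, 1258531, 1268479, 1278467,
  1288439, 1298387, 1308383, 1318379, 1328357, 1338349, 1348331, 1358323, 1368319, 1378301,
  1388297, 1398289, 1408279, 1418267, 1428257, 1438253, 1448221, 1458203, 1468193, 1478189,
  1488181, 1498153, 1508147, 1518137, 1528127, 1538111, 1548103, 1558099, 1568087, 1578077,
  1588073, 1598053, 1608041, 1618039, 1627981, 1637963, 1647959, 1657949, 1667947, 1677941,
  1687937, 1697903, 1707899, 1717861, 1727851, 1737821, 1747799, 1757779, 1767767, 1777753,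
  1787741, 1797673, 1807643, 1817611, 1827593, 1837573, 1847563, 1857553, 1867477, 1877471,
  1887463, 1897459, 1907453, 1917431, 1927421, 1937417, 1947397, 1957391, 1967387, 1977361,
  1987339, 1997321, 2007307, 2017289, 2027269, 2037253, 2047249, 2057233, 2067211, 2077189,
  2087179, 2097169, 2107153, 2117147, 2127143, 2137141, 2147137, 2157131, 2167111, 2177101,
  2187077, 2197049, 2207039, 2217029, 2227019, 2237009, 2246999, 2256973, 2266961, 2276957,
  2286953, 2296939, 2306911, 2316893, 2326889, 2336881, 2346863, 2356843, 2366831, 2376827,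
  2386823, 2396803, 2406799, 2416763, 2426761, 2436757, 2446753, 2456749, 2466707, 2476703,
  2486699, 2496691, 2506687, 2516681, 2526661, 2536657, 2546611, 2556607, 2566601, 2576599,
  2586593, 2596589, 2606587, 2616577, 2626571, 2636567, 2646551, 2656547, 2666539, 2676529,
  2686513, 2696501, 2706481, 2716471, 2726461, 2736451, 2746433, 2756423, 2766389, 2776357,
  2786353, 2796341, 2806333, 2816311, 2826293, 2836279, 2846243, 2856241, 2866223, 2876221,
  2886217, 2896213, 2906207, 2916203, 2926201, 2936191, 2946187, 2956183, 2966153, 2976151,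
  2986129, 2996117, 3006037, 3016033, 3026021, 3036001, 3045989, 3055973, 3065971, 3075959,
  3085949, 3095941, 3105923, 3115921, 3125893, 3135883, 3145873, 3155839, 3165829, 3175811,
  3185803, 3195791, 3205789, 3215783, 3225779, 3235777, 3245771, 3255767, 3265741, 3275737,
  3285719, 3295711, 3305699, 3315679, 3325657, 3335627, 3345611, 3355603, 3365599, 3375583,
  3385579, 3395573, 3405547, 3415541, 3425507, 3435503, 3445501, 3455489, 3465487, 3475477,
  3485441, 3495439, 3505421, 3515419, 3525391, 3535379, 3545359, 3555353, 3565351, 3575339,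
  3585331, 3595309, 3605299, 3615259, 3625243, 3635239, 3645227, 3655219, 3665203, 3675197,
  3685169, 3695149, 3705137, 3715111, 3725107, 3735101, 3745087, 3755083, 3765079, 3775063,
  3785053, 3795031, 3805001, 3814997, 3824993, 3834991, 3844987, 3854969, 3864953, 3874939,
  3884929, 3894923, 3904921, 3914903, 3924901, 3934877, 3944873, 3954871, 3964867, 3974849,
  3984823, 3994817]


set_option maxRecDepth 100000 in
theorem chainOK_check : chainOK sfChain 4 4000010 = true := by decide +kernel

theorem small_case_s1 (n : ℕ) (h1 : 4 < n) (h2 : n ≤ 4000010) : IsRep n :=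
  chainOK_spec sfChain 4 4000010 chainOK_check (fun n h1 h2 => by omega) n h1 h2

/-! ## A Chebyshev type bound for primes in a progression -/

theorem prod_ap_dvd (K J b d : ℕ) (hK : K ∣ J.factorial) (hcop : Nat.Coprime d K) :
    K ∣ ∏ j ∈ Finset.range J, (b + d * j) := by
  rcases Nat.eq_zero_or_pos K with h0 | h0
  · subst h0
    exact absurd (Nat.eq_zero_of_zero_dvd hK) (Nat.factorial_ne_zero J)
  have : NeZero K := ⟨h0.ne'⟩
  rw [← ZMod.natCast_eq_zero_iff]
  have hu : IsUnit (d : ZMod K) := (ZMod.isUnit_iff_coprime d K).2 hcop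
  obtain ⟨u, hu⟩ := hu
  set e : ZMod K := ((u⁻¹ : (ZMod K)ˣ) : ZMod K) with he
  have hde : (d : ZMod K) * e = 1 := by rw [← hu, he]; simp
  let c : ℕ := ((b : ZMod K) * e).val
  have hc : (c : ZMod K) = b * e := by simp [c]
  have key : ((∏ j ∈ Finset.range J, (b + d * j) : ℕ) : ZMod K)
      = d ^ J * ((c.ascFactorial J : ℕ) : ZMod K) := by
    rw [Nat.ascFactorial_eq_prod_range]
    push_cast
    rw [← Finset.card_range J, ← Finset.prod_const, Finset.card_range, ← Finset.prod_mul_distrib]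
    refine Finset.prod_congr rfl fun j _ => ?_
    rw [hc]
    linear_combination (-(b : ZMod K)) * hde
  rw [key]
  have : ((c.ascFactorial J : ℕ) : ZMod K) = 0 := by
    rw [ZMod.natCast_eq_zero_iff]
    exact hK.trans (Nat.factorial_dvd_ascFactorial c J)
  rw [this, mul_zero]

theorem ap_bound (r J b : ℕ) (hr : r.Prime) (hr2 : r ≠ 2) (hb : b ≤ 2 * r ^ 2) (hb0 : 0 < b)
    (S : Finset ℕ) (hS : ∀ q ∈ S, q.Prime ∧ J < q ∧ ∃ j < J, q = b + 2 * r ^ 2 * j) :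
    ∏ q ∈ S, q ≤ (2 * r ^ 2) ^ J * (2 ^ J * r ^ (J / (r - 1))) := by
  set d := 2 * r ^ 2 with hd
  have hF := Nat.factorial_ne_zero J
  have hFpos := Nat.factorial_pos J
  set v2 := J.factorial.factorization 2 with hv2
  set vr := J.factorial.factorization r with hvr
  -- the part of `J!` coprime to `2 r`
  have hc2r : Nat.Coprime (2 ^ v2) (r ^ vr) :=
    Nat.Coprime.pow _ _ ((Nat.coprime_primes Nat.prime_two hr).2 (Ne.symm hr2))
  have hdvd : 2 ^ v2 * r ^ vr ∣ J.factorial :=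
    hc2r.mul_dvd_of_dvd_of_dvd (Nat.ordProj_dvd _ _) (Nat.ordProj_dvd _ _)
  obtain ⟨K, hK⟩ := hdvd
  have hKpos : 0 < K := by
    rcases Nat.eq_zero_or_pos K with h | h
    · subst h; simp at hK; exact absurd hK hF
    · exact h
  have hfac : ∀ p, J.factorial.factorization p
      = (2 ^ v2).factorization p + (r ^ vr).factorization p + K.factorization p := by
    intro p
    rw [hK, Nat.factorization_mul (by have := hr.pos; positivity) hKpos.ne',
      Nat.factorization_mul (by positivity) (by have := hr.pos; positivity)]
    rfl
  have hK2 : ¬ 2 ∣ K := by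
    intro h
    have h1 := hfac 2
    have h2 : 0 < K.factorization 2 := Nat.prime_two.factorization_pos_of_dvd hKpos.ne' h
    rw [Nat.prime_two.factorization_pow] at h1
    simp only [Finsupp.single_eq_same] at h1
    omega
  have hKr : ¬ r ∣ K := by
    intro h
    have h1 := hfac r
    have h2 : 0 < K.factorization r := hr.factorization_pos_of_dvd hKpos.ne' h
    rw [hr.factorization_pow] at h1
    simp only [Finsupp.single_eq_same] at h1
    omega
  have hcop : Nat.Coprime d K := by
    rw [hd]
    exact Nat.Coprime.mul_left ((Nat.Prime.coprime_iff_not_dvd Nat.prime_two).2 hK2)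
      (Nat.Coprime.pow_left _ ((Nat.Prime.coprime_iff_not_dvd hr).2 hKr))
  have h1 : K ∣ ∏ j ∈ Finset.range J, (b + d * j) :=
    prod_ap_dvd K J b d ⟨_, by rw [hK, mul_comm]⟩ hcop
  have h2 : ∏ q ∈ S, q ∣ ∏ j ∈ Finset.range J, (b + d * j) := by
    refine Finset.prod_primes_dvd _ (fun q hq => (hS q hq).1.prime) (fun q hq => ?_)
    obtain ⟨-, -, j, hj, hqj⟩ := hS q hq
    rw [hqj]
    exact Finset.dvd_prod_of_mem (fun j => b + d * j) (Finset.mem_range.2 hj)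
  have h3 : Nat.Coprime (∏ q ∈ S, q) K := by
    refine Nat.Coprime.prod_left fun q hq => ?_
    rw [Nat.Prime.coprime_iff_not_dvd (hS q hq).1]
    intro h
    have h4 : q ∣ J.factorial := by rw [hK]; exact h.mul_left _
    have h5 := ((hS q hq).1.dvd_factorial).1 h4
    exact absurd (hS q hq).2.1 (by omega)
  have h4 : (∏ q ∈ S, q) * K ∣ ∏ j ∈ Finset.range J, (b + d * j) :=
    h3.mul_dvd_of_dvd_of_dvd h2 h1
  have h5 : 0 < ∏ j ∈ Finset.range J, (b + d * j) :=
    Finset.prod_pos fun j _ => by omega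
  have h6 : ∏ j ∈ Finset.range J, (b + d * j) ≤ d ^ J * J.factorial := by
    calc ∏ j ∈ Finset.range J, (b + d * j) ≤ ∏ j ∈ Finset.range J, (d * (j + 1)) :=
          Finset.prod_le_prod' fun j _ => by rw [mul_add, mul_one]; omega
      _ = d ^ J * J.factorial := by
          rw [Finset.prod_mul_distrib, Finset.prod_const, Finset.card_range,
            Finset.prod_range_add_one_eq_factorial]
  have h7 := (Nat.le_of_dvd h5 h4).trans h6
  have h8 : (∏ q ∈ S, q) ≤ d ^ J * (2 ^ v2 * r ^ vr) := by
    refine Nat.le_of_mul_le_mul_right ?_ hKpos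
    calc (∏ q ∈ S, q) * K ≤ d ^ J * J.factorial := h7
      _ = _ := by rw [hK]; ring
  refine h8.trans ?_
  have h9 : v2 ≤ J := by
    have := Nat.factorization_factorial_le_div_pred Nat.prime_two J
    simpa using this
  have h10 : vr ≤ J / (r - 1) := Nat.factorization_factorial_le_div_pred hr J
  have := hr.one_lt
  gcongr <;> omega

open Real in
theorem ap_bound_log (r J b : ℕ) (hr : r.Prime) (hr2 : r ≠ 2) (hb : b ≤ 2 * r ^ 2) (hb0 : 0 < b)
    (S : Finset ℕ) (hS : ∀ q ∈ S, q.Prime ∧ J < q ∧ ∃ j < J, q = b + 2 * r ^ 2 * j) :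
    ∑ q ∈ S, log q ≤ J * (2 * log 2 + 2 * log r + log r / (r - 1)) := by
  have h := ap_bound r J b hr hr2 hb hb0 S hS
  have hr0 : (0 : ℝ) < r := by exact_mod_cast hr.pos
  have hr1 : (1 : ℝ) < r := by exact_mod_cast hr.one_lt
  have h1 : ((∏ q ∈ S, q : ℕ) : ℝ) ≤ (2 * r ^ 2) ^ J * (2 ^ J * r ^ (J / (r - 1))) := by
    exact_mod_cast h
  push_cast at h1
  have hpos : ∀ q ∈ S, (q : ℝ) ≠ 0 := fun q hq => by
    exact_mod_cast (hS q hq).1.ne_zero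
  have h2 : (0 : ℝ) < ∏ q ∈ S, (q : ℝ) :=
    Finset.prod_pos fun q hq => by exact_mod_cast (hS q hq).1.pos
  have h3 := log_le_log h2 h1
  rw [log_prod hpos, log_mul (by positivity) (by positivity), log_mul (by positivity)
    (by positivity), log_pow, log_pow, log_pow, log_mul (by positivity) (by positivity),
    log_pow] at h3
  have h4 : ((J / (r - 1) : ℕ) : ℝ) ≤ J / (r - 1) := by
    have := @Nat.cast_div_le ℝ _ _ _ J (r - 1)
    rwa [Nat.cast_sub hr.one_lt.le, Nat.cast_one] at this
  have h5 : 0 ≤ log r := log_nonneg hr1.le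
  have h6 := mul_le_mul_of_nonneg_right h4 h5
  calc _ ≤ _ := h3
    _ ≤ J * (log 2 + 2 * log r) + (J * log 2 + J / (r - 1) * log r) := by
        push_cast; linarith
    _ = _ := by ring

/-! ## Numerical series -/

open Real in
noncomputable def cc (r : ℕ) : ℝ := (log 2 + log r + log r / (2 * (r - 1))) / (r : ℝ) ^ 2

open Real in
theorem log_bd (r a : ℕ) (hr : 0 < r) (h : r ^ 10 ≤ 2 ^ a) : log r ≤ a / 10 * log 2 := by
  have h1 : ((r : ℝ)) ^ 10 ≤ 2 ^ a := by exact_mod_cast h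
  have h2 := log_le_log (by positivity) h1
  rw [log_pow, log_pow] at h2
  push_cast at h2
  linarith

open Real in
theorem cc_bd (r a : ℕ) (hr : 1 < r) (h : r ^ 10 ≤ 2 ^ a) :
    cc r ≤ (1 + a / 10 + a / 10 / (2 * (r - 1))) / (r : ℝ) ^ 2 * log 2 := by
  have h1 := log_bd r a (by omega) h
  have hr1 : (1 : ℝ) < r := by exact_mod_cast hr
  have hr2 : (0 : ℝ) < 2 * (r - 1) := by linarith
  unfold cc
  rw [div_mul_eq_mul_div]
  refine div_le_div_of_nonneg_right ?_ (by positivity)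
  have h2 := div_le_div_of_nonneg_right h1 hr2.le
  have : a / 10 / (2 * ((r : ℝ) - 1)) * log 2 = a / 10 * log 2 / (2 * (r - 1)) := by ring
  linarith

theorem primes100 : (Finset.Icc 3 100).filter Nat.Prime = {3, 5, 7, 11, 13, 17, 19, 23, 29, 31,
    37, 41, 43, 47, 53, 59, 61, 67, 71, 73, 79, 83, 89, 97} := by decide +kernel

open Real in
theorem cc_base : ∑ r ∈ (Finset.Icc 3 100).filter Nat.Prime, cc r
    ≤ 85 / 100 * log 2 - (log 100 + 19 / 10) / 100 := by
  rw [primes100]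
  repeat rw [Finset.sum_insert (by decide)]
  rw [Finset.sum_singleton]
  have b3 := cc_bd 3 16 (by norm_num) (by norm_num)
  have b5 := cc_bd 5 24 (by norm_num) (by norm_num)
  have b7 := cc_bd 7 29 (by norm_num) (by norm_num)
  have b11 := cc_bd 11 35 (by norm_num) (by norm_num)
  have b13 := cc_bd 13 38 (by norm_num) (by norm_num)
  have b17 := cc_bd 17 41 (by norm_num) (by norm_num)
  have b19 := cc_bd 19 43 (by norm_num) (by norm_num)
  have b23 := cc_bd 23 46 (by norm_num) (by norm_num)
  have b29 := cc_bd 29 49 (by norm_num) (by norm_num)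
  have b31 := cc_bd 31 50 (by norm_num) (by norm_num)
  have b37 := cc_bd 37 53 (by norm_num) (by norm_num)
  have b41 := cc_bd 41 54 (by norm_num) (by norm_num)
  have b43 := cc_bd 43 55 (by norm_num) (by norm_num)
  have b47 := cc_bd 47 56 (by norm_num) (by norm_num)
  have b53 := cc_bd 53 58 (by norm_num) (by norm_num)
  have b59 := cc_bd 59 59 (by norm_num) (by norm_num)
  have b61 := cc_bd 61 60 (by norm_num) (by norm_num)
  have b67 := cc_bd 67 61 (by norm_num) (by norm_num)
  have b71 := cc_bd 71 62 (by norm_num) (by norm_num)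
  have b73 := cc_bd 73 62 (by norm_num) (by norm_num)
  have b79 := cc_bd 79 64 (by norm_num) (by norm_num)
  have b83 := cc_bd 83 64 (by norm_num) (by norm_num)
  have b89 := cc_bd 89 65 (by norm_num) (by norm_num)
  have b97 := cc_bd 97 66 (by norm_num) (by norm_num)
  have hl := log_bd 100 67 (by norm_num) (by norm_num)
  have h2 := log_two_gt_d9
  push_cast at *
  norm_num at *
  linarith

open Real in
theorem cc_sum (N : ℕ) (hN : 100 ≤ N) : ∑ r ∈ (Finset.Icc 3 N).filter Nat.Prime, cc r
    ≤ 85 / 100 * log 2 - (log N + 19 / 10) / N := by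
  induction N, hN using Nat.le_induction with
  | base => simpa using cc_base
  | succ N hN ih =>
    have hN' : (100 : ℝ) ≤ N := by exact_mod_cast hN
    have hlog : log ((N : ℝ) + 1) - log N ≤ 1 / N := by
      rw [← log_div (by positivity) (by positivity)]
      have := log_le_sub_one_of_pos (x := ((N : ℝ) + 1) / N) (by positivity)
      have h : ((N : ℝ) + 1) / N - 1 = 1 / N := by field_simp; ring
      linarith
    have hl0 : 0 ≤ log ((N : ℝ) + 1) := log_nonneg (by linarith)
    have hl1 : log ((N : ℝ) + 1) ≤ 2 * √(N + 1) := by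
      have h1 := log_le_sub_one_of_pos (x := √((N : ℝ) + 1)) (by positivity)
      rw [log_sqrt (by positivity)] at h1
      linarith
    have hl2 : log ((N : ℝ) + 1) / (2 * N) ≤ 6 / 100 * 2 := by
      rw [div_le_iff₀ (by positivity)]
      have : √((N : ℝ) + 1) ≤ 12 / 100 * N := by
        rw [sqrt_le_left (by positivity)]
        nlinarith
      linarith
    have hstep : cc (N + 1) ≤ (log N + 19 / 10) / N - (log ((N : ℝ) + 1) + 19 / 10) / (N + 1) := by
      have hN0 : (0 : ℝ) < N := by linarith
      have e1 : cc (N + 1) ≤ (log ((N : ℝ) + 1) + 82 / 100) / (N * (N + 1)) := by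
        unfold cc
        push_cast
        rw [add_sub_cancel_right]
        have h2 := log_two_lt_d9
        refine div_le_div₀ (by positivity) (by linarith) (by positivity) (by nlinarith)
      have e2 : (log ((N : ℝ) + 1) - 1 / N + 19 / 10) / N ≤ (log N + 19 / 10) / N :=
        div_le_div_of_nonneg_right (by linarith) hN0.le
      have e3 : (log ((N : ℝ) + 1) - 1 / N + 19 / 10) / N - (log ((N : ℝ) + 1) + 19 / 10) / (N + 1)
          - (log ((N : ℝ) + 1) + 82 / 100) / (N * (N + 1))
          = (8 / 100 * N - 1) / (N ^ 2 * (N + 1)) := by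
        field_simp
        ring
      have e4 : 0 ≤ (8 / 100 * (N : ℝ) - 1) / (N ^ 2 * (N + 1)) :=
        div_nonneg (by linarith) (by positivity)
      linarith
    have hcc : 0 ≤ cc (N + 1) := by
      unfold cc
      push_cast
      rw [add_sub_cancel_right]
      positivity
    rw [Finset.sum_filter, Finset.sum_Icc_succ_top (by omega), ← Finset.sum_filter]
    push_cast
    split_ifs <;> linarith

/-! ## Large even numbers -/

theorem sum_biUnion_le' (R : Finset ℕ) (S : ℕ → Finset ℕ) (f : ℕ → ℝ) (hf : ∀ q, 0 ≤ f q) :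
    ∑ q ∈ R.biUnion S, f q ≤ ∑ r ∈ R, ∑ q ∈ S r, f q := by
  induction R using Finset.induction_on with
  | empty => simp
  | insert a R ha ih =>
    rw [Finset.biUnion_insert, Finset.sum_insert ha]
    have h := Finset.sum_union_inter (s₁ := S a) (s₂ := R.biUnion S) (f := f)
    have h2 : 0 ≤ ∑ q ∈ S a ∩ R.biUnion S, f q := Finset.sum_nonneg fun q _ => hf q
    linarith

open Real in
theorem bad_bound (m r : ℕ) (hm : Even m) (hr : r.Prime) (hr3 : 3 ≤ r) (hrm : r * r < m)
    (S : Finset ℕ)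
    (hS : ∀ q ∈ S, q.Prime ∧ m + 9 < 18 * q ∧ 2 < q ∧ q < m ∧ r * r ∣ m - q) :
    ∑ q ∈ S, log q ≤ m * cc r + (log 2 + log r + log r / (2 * (r - 1))) := by
  have hr0 : 0 < r * r := by positivity
  set d := 2 * r ^ 2 with hd
  have hdr : d = 2 * (r * r) := by rw [hd]; ring
  set J := (m - r * r - 1) / d + 1 with hJ
  set b := (m - r * r - 1) % d + 1 with hb
  have hdiv : d * (J - 1) + b = m - r * r := by
    have := Nat.div_add_mod (m - r * r - 1) d
    rw [hJ, hb, Nat.add_sub_cancel]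
    omega
  have hbd : b ≤ d := Nat.mod_lt _ (by omega)
  have hJd : d * J ≤ m + r * r := by
    have h1 : d * J = d * (J - 1) + d := by
      rw [hJ, Nat.add_sub_cancel]; ring
    omega
  have hJ18 : 18 * J ≤ m + 9 := by
    have h9 : 9 ≤ r * r := by nlinarith
    -- `2 R J ≤ m + R` with `R ≥ 9` and `R < m`
    rw [hdr] at hJd
    have hJ1 : 1 ≤ J := Nat.le_add_left 1 _
    have h10 : 2 * J - 1 + 1 = 2 * J := Nat.sub_add_cancel (by linarith)
    have h11 : (2 * J - 1) * (r * r) ≤ m := by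
      have : (2 * J - 1) * (r * r) + r * r = 2 * (r * r) * J := by
        calc (2 * J - 1) * (r * r) + r * r = (2 * J - 1 + 1) * (r * r) := by ring
          _ = _ := by rw [h10]; ring
      omega
    have h12 : (2 * J - 1) * 9 ≤ m := le_trans (Nat.mul_le_mul_left _ h9) h11
    omega
  have key := ap_bound_log r J b hr (by omega) hbd (by omega) S (by
    intro q hq
    obtain ⟨h1, h2, h3, h4, h5⟩ := hS q hq
    refine ⟨h1, by omega, ?_⟩
    obtain ⟨u, hu⟩ := h5
    have hqo : Odd q := h1.odd_of_ne_two (by omega)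
    have hodd : Odd (m - q) := Nat.Even.sub_odd h4.le hm hqo
    rw [hu] at hodd
    have huo : Odd u := (Nat.odd_mul.1 hodd).2
    obtain ⟨i, hi⟩ := huo
    have e1 : m - q = d * i + r * r := by rw [hu, hi, hdr]; ring
    have e2 : d * i < d * J := by
      have : d * J = d * (J - 1) + d := by
        rw [hJ, Nat.add_sub_cancel]; ring
      omega
    have e3 : i < J := Nat.lt_of_mul_lt_mul_left e2
    refine ⟨J - 1 - i, by omega, ?_⟩
    rw [← hd]
    have e4 : d * (J - 1) = d * (J - 1 - i) + d * i := by
      rw [← mul_add]; congr 1; omega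
    omega)
  refine key.trans ?_
  have hr1 : (3 : ℝ) ≤ r := by exact_mod_cast hr3
  have hl : 0 ≤ log r := log_nonneg (by linarith)
  have hl2 : 0 ≤ log 2 := log_nonneg (by norm_num)
  have hr2 : (0 : ℝ) < r - 1 := by linarith
  have hX : 0 ≤ log 2 + log r + log r / (2 * (r - 1)) := by positivity
  have hJr : 2 * (r : ℝ) ^ 2 * J ≤ m + r ^ 2 := by
    have : 2 * r ^ 2 * J ≤ m + r ^ 2 := by rw [← hd]; rw [sq]; exact hJd
    exact_mod_cast this
  have hJ' : 2 * (J : ℝ) ≤ m / r ^ 2 + 1 := by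
    have : (m : ℝ) / r ^ 2 + 1 = (m + r ^ 2) / r ^ 2 := by field_simp
    rw [this, le_div_iff₀ (by positivity)]
    linarith
  have h := mul_le_mul_of_nonneg_right hJ' hX
  unfold cc
  have e : (J : ℝ) * (2 * log 2 + 2 * log r + log r / (r - 1))
      = 2 * J * (log 2 + log r + log r / (2 * (r - 1))) := by
    field_simp
  rw [e]
  refine h.trans (le_of_eq ?_)
  ring

open Real in
theorem large_case_s1 (m : ℕ) (hm : Even m) (hm0 : 4000000 ≤ m) :
    ∃ q : ℕ, q.Prime ∧ q < m ∧ Squarefree (m - q) := by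
  by_contra! hcon
  set A := (Finset.range m).filter (fun q => q.Prime ∧ m + 9 < 18 * q) with hA
  set N := Nat.sqrt m with hN
  set R := (Finset.Icc 3 N).filter Nat.Prime with hR
  have hmR : (4000000 : ℝ) ≤ m := by exact_mod_cast hm0
  have hNN : N * N ≤ m := Nat.sqrt_le m
  have hN100 : 100 ≤ N := by rw [hN, Nat.le_sqrt]; omega
  have hNm : N < m := by nlinarith
  have hL2 := log_two_gt_d9
  have hL2' := log_two_lt_d9
  -- `A` is covered by the bad sets
  let S : ℕ → Finset ℕ := fun r => A.filter (fun q => r * r ∣ m - q ∧ r * r < m)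
  have hcover : A ⊆ R.biUnion S := by
    intro q hq
    have hq' := hq
    simp only [hA, Finset.mem_filter, Finset.mem_range] at hq'
    obtain ⟨h1, h2, h3⟩ := hq'
    have h4 := hcon q h2 h1
    rw [Nat.squarefree_iff_prime_squarefree] at h4
    push Not at h4
    obtain ⟨r, hr, hrd⟩ := h4
    have h5 : r * r ≤ m - q := Nat.le_of_dvd (by omega) hrd
    have h6 := h2.pos
    have hr3 : 3 ≤ r := by
      have := hr.two_le
      rcases Nat.lt_or_ge 2 r with h | h
      · exact h
      · have : r = 2 := by omega
        subst this
        have hqo : Odd q := h2.odd_of_ne_two (by omega)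
        have hodd : Odd (m - q) := Nat.Even.sub_odd h1.le hm hqo
        rw [← Nat.not_even_iff_odd] at hodd
        exact absurd (even_iff_two_dvd.2 ((Dvd.intro _ rfl).trans hrd)) hodd
    simp only [Finset.mem_biUnion]
    refine ⟨r, ?_, ?_⟩
    · simp only [hR, Finset.mem_filter, Finset.mem_Icc]
      exact ⟨⟨hr3, by rw [hN, Nat.le_sqrt]; omega⟩, hr⟩
    · simp only [S, Finset.mem_filter]
      exact ⟨hq, hrd, by omega⟩
  have hlognn : ∀ q : ℕ, 0 ≤ log (q : ℝ) := fun q => log_natCast_nonneg q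
  have hb1 : ∑ q ∈ A, log (q : ℝ) ≤ ∑ r ∈ R, ∑ q ∈ S r, log (q : ℝ) := by
    refine (Finset.sum_le_sum_of_subset_of_nonneg hcover (fun q _ _ => hlognn q)).trans ?_
    exact sum_biUnion_le' R S _ hlognn
  have hb2 : ∀ r ∈ R, ∑ q ∈ S r, log (q : ℝ) ≤ m * cc r + log m := by
    intro r hr
    simp only [hR, Finset.mem_filter, Finset.mem_Icc] at hr
    obtain ⟨⟨hr3, hrN⟩, hrp⟩ := hr
    have hlm : log r ≤ log m := by
      refine log_le_log (by exact_mod_cast hrp.pos) ?_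
      exact_mod_cast (by omega : r ≤ m)
    have hlm2 : 2 * log r ≤ log m := by
      have h1 : ((r : ℝ)) ^ 2 ≤ m := by
        have : r ^ 2 ≤ m := by nlinarith
        exact_mod_cast this
      have h2 := log_le_log (by have := hrp.pos; positivity) h1
      rw [log_pow] at h2
      exact_mod_cast h2
    have hl2 : 8 * log 2 ≤ log m := by
      have : log ((2 : ℝ) ^ 8) ≤ log m := log_le_log (by norm_num) (by linarith)
      rw [log_pow] at this
      exact_mod_cast this
    rcases Nat.lt_or_ge (r * r) m with hrm | hrm
    · have h := bad_bound m r hm hrp hr3 hrm (S r) (by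
        intro q hq
        simp only [S, hA, Finset.mem_filter, Finset.mem_range] at hq
        obtain ⟨⟨h1, h2, h3⟩, h4, h5⟩ := hq
        exact ⟨h2, h3, by omega, h1, h4⟩)
      have hr1 : (3 : ℝ) ≤ r := by exact_mod_cast hr3
      have h3 : log r / (2 * (r - 1)) ≤ log r / 4 :=
        div_le_div_of_nonneg_left (hlognn r) (by norm_num) (by linarith)
      linarith
    · have h1 : S r = ∅ := by
        apply Finset.filter_false_of_mem
        intro q _ h
        omega
      rw [h1, Finset.sum_empty]
      have hr1 : (3 : ℝ) ≤ r := by exact_mod_cast hr3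
      have hr2 : (0 : ℝ) < r - 1 := by linarith
      have : 0 ≤ cc r := by
        have := hlognn r
        unfold cc
        positivity
      have := hlognn m
      positivity
  have hcard : (R.card : ℝ) ≤ √m := by
    have h1 : R.card ≤ N := by
      refine (Finset.card_filter_le _ _).trans ?_
      rw [Nat.card_Icc]; omega
    have h2 : (N : ℝ) ≤ √m := by
      rw [hN]; exact Real.nat_sqrt_le_real_sqrt
    exact le_trans (by exact_mod_cast h1) h2
  have hb3 : ∑ q ∈ A, log (q : ℝ) ≤ m * (85 / 100 * log 2) + √m * log m := by
    refine hb1.trans ((Finset.sum_le_sum hb2).trans ?_)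
    rw [Finset.sum_add_distrib, ← Finset.mul_sum, Finset.sum_const, nsmul_eq_mul]
    have h1 := cc_sum N hN100
    have h2 : 0 ≤ (log N + 19 / 10) / N := by have := hlognn N; positivity
    have h3 : ∑ r ∈ R, cc r ≤ 85 / 100 * log 2 := by rw [hR]; linarith
    have := hlognn m
    gcongr
  have hb4 : Chebyshev.theta m ≤ ∑ q ∈ A, log (q : ℝ) + Chebyshev.theta (((m + 9) / 18 : ℕ) : ℝ) := by
    unfold Chebyshev.theta
    rw [Nat.floor_natCast, Nat.floor_natCast]
    have hsub : (Finset.Ioc 0 m).filter Nat.Prime ⊆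
        A ∪ (Finset.Ioc 0 ((m + 9) / 18)).filter Nat.Prime := by
      intro q hq
      simp only [hA, Finset.mem_union, Finset.mem_filter, Finset.mem_Ioc, Finset.mem_range] at hq ⊢
      obtain ⟨⟨h1, h2⟩, h3⟩ := hq
      have h4 : q ≠ m := by
        rintro rfl
        have := (h3.even_iff).1 hm
        omega
      rcases Nat.lt_or_ge (m + 9) (18 * q) with h | h
      · left; exact ⟨by omega, h3, h⟩
      · right; exact ⟨⟨h1, by omega⟩, h3⟩
    refine (Finset.sum_le_sum_of_subset_of_nonneg hsub (fun q _ _ => hlognn q)).trans ?_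
    have h := Finset.sum_union_inter (s₁ := A)
      (s₂ := (Finset.Ioc 0 ((m + 9) / 18)).filter Nat.Prime) (f := fun q : ℕ => log (q : ℝ))
    have h2 : 0 ≤ ∑ q ∈ A ∩ (Finset.Ioc 0 ((m + 9) / 18)).filter Nat.Prime, log (q : ℝ) :=
      Finset.sum_nonneg fun q _ => hlognn q
    linarith
  have hb5 : Chebyshev.theta (((m + 9) / 18 : ℕ) : ℝ) ≤ 2 * log 2 * ((m + 9) / 18) := by
    have h1 := Chebyshev.theta_le_log4_mul_x (x := (((m + 9) / 18 : ℕ) : ℝ)) (by positivity)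
    have h2 : log 4 = 2 * log 2 := by
      rw [show (4 : ℝ) = 2 ^ 2 by norm_num, log_pow]; norm_num
    have h3 : (((m + 9) / 18 : ℕ) : ℝ) ≤ (m + 9) / 18 := by
      have := @Nat.cast_div_le ℝ _ _ _ (m + 9) 18
      exact_mod_cast this
    rw [h2] at h1
    exact h1.trans (by gcongr)
  have hb6 := Chebyshev.theta_ge m
  -- numerical contradiction
  set s := √(m : ℝ) with hs
  have hss : s * s = m := Real.mul_self_sqrt (by positivity)
  have hs2 : 2000 ≤ s := by
    rw [hs]; apply Real.le_sqrt_of_sq_le; linarith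
  have hlogm : log m = 2 * log s := by
    rw [hs, log_sqrt (by positivity)]; ring
  have hlogs : log s ≤ s / 2000 - 1 + 11 * log 2 := by
    have h1 := log_le_sub_one_of_pos (x := s / 2000) (by positivity)
    rw [log_div (by positivity) (by norm_num)] at h1
    have h2 : log 2000 ≤ 11 * log 2 := by
      have : log (2000 : ℝ) ≤ log (2 ^ 11) := log_le_log (by norm_num) (by norm_num)
      rw [log_pow] at this
      exact_mod_cast this
    linarith
  have hlog1 : log ((m : ℝ) + 1) ≤ 2 * s := by
    have h1 : log ((m : ℝ) + 1) ≤ log ((2 * s) * (2 * s)) :=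
      log_le_log (by positivity) (by nlinarith)
    rw [log_mul (by positivity) (by positivity)] at h1
    have h2 := log_le_sub_one_of_pos (x := s) (by positivity)
    rw [log_mul (by norm_num) (by positivity)] at h1
    linarith
  have hfin : (m : ℝ) * log 2 * (7 / 180) ≤ 6 * (s * log s) + 2 * s + log 2 := by
    rw [hlogm] at hb6 hb3
    linarith
  have h1 : s * log s ≤ s * (s / 2000 + 6.625) :=
    mul_le_mul_of_nonneg_left (by linarith) (by linarith)
  have h2 : (m : ℝ) * 0.6931 ≤ m * log 2 := mul_le_mul_of_nonneg_left (by linarith) (by linarith)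
  rw [← hss] at hfin h2
  nlinarith

/-- Every integer greater than four can be written as the sum of two primes and a
square-free number. -/
theorem two_primes_add_squarefree (n : ℕ) (hn : 4 < n) :
    ∃ p q k : ℕ, p.Prime ∧ q.Prime ∧ Squarefree k ∧ n = p + q + k := by
  rcases Nat.lt_or_ge 4000010 n with h | h
  · rcases Nat.even_or_odd n with he | ho
    · obtain ⟨q, hq, hqm, hs⟩ := large_case_s1 (n - 2)
        ((Nat.even_sub (by omega)).2 (by simp [he])) (by omega)
      exact ⟨2, q, n - 2 - q, Nat.prime_two, hq, hs, by omega⟩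
    · obtain ⟨q, hq, hqm, hs⟩ := large_case_s1 (n - 3)
        (Nat.Odd.sub_odd ho (by decide)) (by omega)
      exact ⟨3, q, n - 3 - q, Nat.prime_three, hq, hs, by omega⟩
  · exact small_case_s1 n hn h
end

section
/- Every integer greater than two, except for 11, can be written as the sum of a prime and a square-free number which is co-prime to three. -/
namespace PSC

def msk (s : ℕ) : ℕ → ℕ
  | 0 => 1
  | i + 1 => msk s i ||| (msk s i <<< (s * 2 ^ i))

def bad (N : ℕ) : ℕ → ℕ
  | 0 => msk 3 (Nat.log2 (N / 3) + 1)
  | q + 1 => bif Nat.ble (q + 2) 13 || Nat.beq (Nat.gcd (q + 2) 30030) 1 then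
      bad N q ||| msk ((q + 2) ^ 2) (Nat.log2 (N / (q + 2) ^ 2) + 1) else bad N q

def allBad (N B : ℕ) : List ℕ → ℕ
  | [] => 2 ^ N - 1
  | p :: ps => allBad N B ps &&& ((B <<< p) ||| (2 ^ p - 1))

def pl : List ℕ := [2,3,5,7,11,13,17,19,23,29,31,37,41,43,47,53,59,61,67,71,73,79,83,89,97]

theorem fin_check : allBad 2000000 (bad 2000000 1413) pl = 2055 := by decide +kernel

theorem msk_spec (s i j : ℕ) (h : j < 2 ^ i) : (msk s i).testBit (s * j) = true := by
  induction i generalizing j with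
  | zero => have : j = 0 := by simpa using h
            subst this; simp [msk]
  | succ i ih =>
    rw [msk, Nat.testBit_or, Bool.or_eq_true]
    by_cases hj : j < 2 ^ i
    · exact Or.inl (ih j hj)
    · right
      have h2 : s * j = s * 2 ^ i + s * (j - 2 ^ i) := by
        rw [← Nat.mul_add]; congr 1; omega
      rw [Nat.testBit_shiftLeft, h2, Nat.add_sub_cancel_left, ih _ (by rw [pow_succ] at h; omega)]
      simp

theorem msk_spec' (N s m : ℕ) (hs : 0 < s) (h : s ∣ m) (hm : m < N) :
    (msk s (Nat.log2 (N / s) + 1)).testBit m = true := by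
  obtain ⟨j, rfl⟩ := h
  apply msk_spec
  have : j ≤ N / s := by
    rw [Nat.le_div_iff_mul_le hs]; nlinarith
  exact lt_of_le_of_lt this Nat.lt_log2_self

theorem bad_spec (N Q m : ℕ) (hm : m < N) (h : (bad N Q).testBit m = false) :
    ¬ 3 ∣ m ∧ ∀ q, q.Prime → q < Q + 2 → ¬ q ^ 2 ∣ m := by
  induction Q with
  | zero =>
    refine ⟨fun h3 => ?_, fun q h1 h2 => by have := h1.two_le; omega⟩
    rw [bad, msk_spec' N 3 m (by norm_num) h3 hm] at h
    exact absurd h (by simp)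
  | succ Q ih =>
    rw [bad] at h
    by_cases hc : (Nat.ble (Q + 2) 13 || Nat.beq (Nat.gcd (Q + 2) 30030) 1) = true
    · rw [hc, cond_true, Nat.testBit_or, Bool.or_eq_false_iff] at h
      obtain ⟨h3, ih⟩ := ih h.1
      refine ⟨h3, fun q h1 h2 hq => ?_⟩
      by_cases hqq : q < Q + 2
      · exact ih q h1 hqq hq
      · have : q = Q + 2 := by omega
        subst this
        rw [msk_spec' N _ m (by positivity) hq hm] at h
        exact absurd h.2 (by simp)
    · rw [Bool.not_eq_true] at hc
      rw [hc, cond_false] at h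
      obtain ⟨h3, ih⟩ := ih h
      refine ⟨h3, fun q h1 h2 hq => ?_⟩
      by_cases hqq : q < Q + 2
      · exact ih q h1 hqq hq
      · have : q = Q + 2 := by omega
        subst this
        exfalso
        rw [Bool.or_eq_false_iff] at hc
        have h13 : ¬ (Q + 2 ≤ 13) := by
          intro hle
          have := Nat.ble_eq_true_of_le hle
          rw [this] at hc
          exact absurd hc.1 (by simp)
        have hg : Nat.gcd (Q + 2) 30030 = 1 := by
          rw [← Nat.coprime_iff_gcd_eq_one, h1.coprime_iff_not_dvd]
          intro hd
          have e : 30030 = 2 * (3 * (5 * (7 * (11 * 13)))) := by norm_num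
          rw [e, h1.dvd_mul, h1.dvd_mul, h1.dvd_mul, h1.dvd_mul, h1.dvd_mul] at hd
          rcases hd with hd | hd | hd | hd | hd | hd <;>
            exact absurd (Nat.le_of_dvd (by norm_num) hd) (by omega)
        rw [hg] at hc
        exact absurd hc.2 (by decide)

theorem allBad_spec (N B n : ℕ) (hn : n < N) (l : List ℕ)
    (h : (allBad N B l).testBit n = false) : ∃ p ∈ l, p ≤ n ∧ B.testBit (n - p) = false := by
  induction l with
  | nil => 
    rw [allBad, Nat.testBit_two_pow_sub_one] at h
    simp [hn] at h
  | cons p ps ih =>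
    rw [allBad, Nat.testBit_and, Bool.and_eq_false_iff] at h
    rcases h with h | h
    · obtain ⟨p', h1, h2⟩ := ih h
      exact ⟨p', by simp [h1], h2⟩
    · rw [Nat.testBit_or, Bool.or_eq_false_iff, Nat.testBit_two_pow_sub_one, Nat.testBit_shiftLeft] at h
      have hp : p ≤ n := by simpa using h.2
      refine ⟨p, by simp, hp, ?_⟩
      simpa [hp] using h.1

theorem pl_prime : ∀ p ∈ pl, p.Prime := by
  unfold pl; norm_num

theorem small_case (n : ℕ) (hn : 2 < n) (hne : n ≠ 11) (hN : n < 2000000) :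
    ∃ p k : ℕ, p.Prime ∧ Squarefree k ∧ Nat.gcd k 3 = 1 ∧ n = p + k := by
  have h : (allBad 2000000 (bad 2000000 1413) pl).testBit n = false := by
    rw [fin_check]
    by_cases h12 : n < 12
    · interval_cases n <;> first | omega | decide
    · apply Nat.testBit_lt_two_pow
      calc 2055 < 2 ^ 12 := by norm_num
        _ ≤ 2 ^ n := Nat.pow_le_pow_right (by norm_num) (by omega)
  obtain ⟨p, hp, hpn, hb⟩ := allBad_spec _ _ n hN _ h
  obtain ⟨h3, hq⟩ := bad_spec _ _ _ (by omega) hb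
  refine ⟨p, n - p, pl_prime p hp, ?_, ?_, by omega⟩
  · rw [Nat.squarefree_iff_prime_squarefree]
    intro q hqp hd
    by_cases hlt : q < 1413 + 2
    · exact hq q hqp hlt (by rw [pow_two]; exact hd)
    · have h0 : n - p ≠ 0 := by
        intro h0; apply h3; rw [h0]; simp
      have := Nat.le_of_dvd (by omega) hd
      have : 1415 * 1415 ≤ q * q := Nat.mul_le_mul (by omega) (by omega)
      omega
  · have := (Nat.Prime.coprime_iff_not_dvd Nat.prime_three).2 h3
    exact this.symm

end PSC

namespace PSC
open Finset ArithmeticFunction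

/-- number of `j < M` with `d ∣ c + k j` -/
def cnt (k c M d : ℕ) : ℕ := #{j ∈ range M | d ∣ c + k * j}

lemma log_eq_sum (X m : ℕ) (hm : m ≠ 0) (hX : m ≤ X) :
    Real.log m = ∑ d ∈ Ioc 0 X, if d ∣ m then vonMangoldt d else 0 := by
  rw [← vonMangoldt_sum, ← sum_filter]
  apply sum_congr _ (fun _ _ => rfl)
  ext d
  simp only [Nat.mem_divisors, mem_filter, mem_Ioc]
  constructor
  · rintro ⟨h, -⟩
    exact ⟨⟨Nat.pos_of_dvd_of_pos h (by omega), (Nat.le_of_dvd (by omega) h).trans hX⟩, h⟩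
  · rintro ⟨-, h⟩
    exact ⟨h, hm⟩

lemma sum_log_prog (k c M : ℕ) (hc : 1 ≤ c) (hck : c ≤ k) :
    ∑ j ∈ range M, Real.log ((c + k * j : ℕ) : ℝ) =
      ∑ d ∈ Ioc 0 (k * M), vonMangoldt d * (cnt k c M d : ℝ) := by
  have h1 : ∀ j ∈ range M, Real.log ((c + k * j : ℕ) : ℝ) =
      ∑ d ∈ Ioc 0 (k * M), if d ∣ c + k * j then vonMangoldt d else 0 := by
    intro j hj
    have hj := mem_range.1 hj
    apply log_eq_sum _ _ (by omega)
    have : k * (j + 1) ≤ k * M := Nat.mul_le_mul_left _ hj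
    nlinarith
  rw [sum_congr rfl h1, sum_comm]
  apply sum_congr rfl
  intro d _
  rw [← sum_filter, sum_const, nsmul_eq_mul, mul_comm, cnt]

lemma log_fact (M X : ℕ) (h : M ≤ X) :
    Real.log (M.factorial : ℝ) = ∑ d ∈ Ioc 0 X, vonMangoldt d * ((M / d : ℕ) : ℝ) := by
  have h0 : Real.log (M.factorial : ℝ) = ∑ i ∈ Ioc 0 M, Real.log (i : ℝ) := by
    clear h
    induction M with
    | zero => simp
    | succ M ih =>
      rw [Nat.factorial_succ, Nat.cast_mul, Real.log_mul (by positivity) (by positivity), ih,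
        ← insert_Ioc_right_eq_Ioc_add_one (Nat.zero_le M), sum_insert (by simp)]
  have h1 : ∀ i ∈ Ioc 0 M, Real.log (i : ℝ) =
      ∑ d ∈ Ioc 0 X, if d ∣ i then vonMangoldt d else 0 := by
    intro i hi
    have hi := mem_Ioc.1 hi
    exact log_eq_sum _ _ (by omega) (by omega)
  rw [h0, sum_congr rfl h1, sum_comm]
  apply sum_congr rfl
  intro d _
  rw [← sum_filter, sum_const, nsmul_eq_mul, mul_comm, Nat.Ioc_filter_dvd_card_eq_div]

/-- log of the progression product over the factorial -/
noncomputable def DD (k c M : ℕ) : ℝ :=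
  ∑ j ∈ range M, Real.log ((c + k * j : ℕ) : ℝ) - Real.log (M.factorial : ℝ)

lemma DD_eq (k c M : ℕ) (hc : 1 ≤ c) (hck : c ≤ k) :
    DD k c M = ∑ d ∈ Ioc 0 (k * M), vonMangoldt d * ((cnt k c M d : ℝ) - ((M / d : ℕ) : ℝ)) := by
  rw [DD, sum_log_prog k c M hc hck, log_fact M (k * M) (Nat.le_mul_of_pos_left _ (by omega)),
    ← sum_sub_distrib]
  simp_rw [mul_sub]

lemma DD_le (k c M : ℕ) (hc : 1 ≤ c) (hck : c ≤ k) : DD k c M ≤ M * Real.log k := by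
  rw [DD, sub_le_iff_le_add]
  induction M with
  | zero => simp
  | succ M ih =>
    have hk : (0 : ℝ) < k := by exact_mod_cast (by omega : 0 < k)
    rw [sum_range_succ, Nat.factorial_succ, Nat.cast_mul,
      Real.log_mul (by positivity) (by positivity)]
    have : Real.log ((c + k * M : ℕ) : ℝ) ≤ Real.log k + Real.log ((M + 1 : ℕ) : ℝ) := by
      rw [← Real.log_mul hk.ne' (by positivity)]
      apply Real.log_le_log (by exact_mod_cast (by omega : 0 < c + k * M))
      exact_mod_cast (by nlinarith : c + k * M ≤ k * (M + 1))
    push_cast at *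
    linarith

lemma DD_ge (k c M : ℕ) (hc : 1 ≤ c) (hck : c ≤ k) (hM : 1 ≤ M) :
    M * Real.log k - Real.log (k * M) ≤ DD k c M := by
  obtain ⟨M, rfl⟩ : ∃ m, M = m + 1 := ⟨M - 1, by omega⟩
  have hk : (0 : ℝ) < k := by exact_mod_cast (by omega : 0 < k)
  have key : M * Real.log k + Real.log (M.factorial : ℝ) ≤
      ∑ j ∈ range (M + 1), Real.log ((c + k * j : ℕ) : ℝ) := by
    clear hM
    induction M with
    | zero =>
      simp
      exact Real.log_natCast_nonneg c
    | succ M ih =>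
      rw [sum_range_succ, Nat.factorial_succ, Nat.cast_mul,
        Real.log_mul (by positivity) (by positivity)]
      have : Real.log k + Real.log ((M + 1 : ℕ) : ℝ) ≤ Real.log ((c + k * (M + 1) : ℕ) : ℝ) := by
        rw [← Real.log_mul hk.ne' (by positivity)]
        apply Real.log_le_log (by positivity)
        exact_mod_cast (by nlinarith : k * (M + 1) ≤ c + k * (M + 1))
      push_cast at *
      linarith
  rw [DD, Nat.factorial_succ, Nat.cast_mul, Real.log_mul hk.ne' (by positivity),
    Real.log_mul (by positivity) (by positivity)]
  push_cast at *
  linarith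

lemma cnt_bounds (k c M d : ℕ) (hd : 0 < d) (hdk : Nat.Coprime d k) :
    M / d ≤ cnt k c M d ∧ cnt k c M d ≤ M / d + 1 := by
  obtain ⟨v, hv⟩ : ∃ v : ℕ, ∀ j, d ∣ c + k * j ↔ j ≡ v [MOD d] := by
    have : NeZero d := ⟨by omega⟩
    let u := ZMod.unitOfCoprime k hdk.symm
    refine ⟨(-(c : ZMod d) * (u⁻¹ : (ZMod d)ˣ)).val, fun j => ?_⟩
    rw [← ZMod.natCast_eq_natCast_iff, ← ZMod.natCast_eq_zero_iff]
    rw [ZMod.natCast_val, ZMod.cast_id]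
    push_cast
    have hu : (k : ZMod d) = u := (ZMod.coe_unitOfCoprime k hdk.symm).symm
    rw [hu, Units.eq_mul_inv_iff_mul_eq]
    constructor
    · intro h; linear_combination h
    · intro h; linear_combination h
  have : cnt k c M d = Nat.count (· ≡ v [MOD d]) M := by
    rw [cnt, Nat.count_eq_card_filter_range]
    simp_rw [hv]
  rw [this, Nat.count_modEq_card _ hd]
  split_ifs <;> omega

lemma cnt_zero (k c M d : ℕ) (hck : Nat.Coprime c k) (hd : ¬ Nat.Coprime d k) :
    cnt k c M d = 0 := by
  rw [cnt, card_eq_zero, filter_eq_empty_iff]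
  intro j _ h
  obtain ⟨p, hp, hpd, hpk⟩ := Nat.Prime.not_coprime_iff_dvd.1 hd
  have h1 : p ∣ c + k * j := hpd.trans h
  have h2 : p ∣ c := (Nat.dvd_add_left (hpk.mul_right j)).1 h1
  exact Nat.Prime.not_coprime_iff_dvd.2 ⟨p, hp, h2, hpk⟩ hck

lemma cnt_pos (k c M d : ℕ) (hck : c ≤ k) (hc : 1 ≤ c) (hd : d ≡ c [MOD k]) (h0 : 0 < d)
    (hM : d ≤ k * M) : 1 ≤ cnt k c M d := by
  rw [cnt, Nat.one_le_iff_ne_zero, Ne, card_eq_zero, ← Ne, ← nonempty_iff_ne_empty]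
  have hcd : c ≤ d := by
    by_contra hlt
    push Not at hlt
    have := (Nat.modEq_iff_dvd' hlt.le).1 hd
    have := Nat.le_of_dvd (by omega) this
    omega
  obtain ⟨j, hj⟩ := (Nat.modEq_iff_dvd' hcd).1 hd.symm
  have e : d = c + k * j := by omega
  refine ⟨j, mem_filter.2 ⟨mem_range.2 ?_, e ▸ dvd_rfl⟩⟩
  by_contra hlt
  push Not at hlt
  have := Nat.mul_le_mul_left k hlt
  omega

/-- part of `log M!` supported on prime powers not coprime to `k`. -/
noncomputable def NN (k M : ℕ) : ℝ :=
  ∑ d ∈ Ioc 0 (k * M) with ¬ Nat.Coprime d k, vonMangoldt d * ((M / d : ℕ) : ℝ)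

lemma DD_add_NN (k c M : ℕ) (hc : 1 ≤ c) (hck : c ≤ k) (hcop : Nat.Coprime c k) :
    DD k c M + NN k M = ∑ d ∈ Ioc 0 (k * M) with Nat.Coprime d k,
      vonMangoldt d * ((cnt k c M d : ℝ) - ((M / d : ℕ) : ℝ)) := by
  rw [DD_eq k c M hc hck, NN, ← sum_filter_add_sum_filter_not (Ioc 0 (k * M))
    (fun d => Nat.Coprime d k), add_assoc, ← sum_add_distrib]
  rw [add_eq_left]
  apply sum_eq_zero
  intro d hd
  rw [cnt_zero k c M d hcop (mem_filter.1 hd).2]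
  push_cast; ring

lemma NN_le (k M : ℕ) (hk : 0 < k) :
    NN k M ≤ M * ∑ l ∈ k.primeFactors, Real.log l / (l - 1) := by
  have hnn : ∀ d : ℕ, 0 ≤ vonMangoldt d * ((M / d : ℕ) : ℝ) := fun d =>
    mul_nonneg vonMangoldt_nonneg (Nat.cast_nonneg _)
  have h1 : NN k M ≤ ∑ l ∈ k.primeFactors, ∑ e ∈ Ico 1 (k * M + 1),
      vonMangoldt (l ^ e) * ((M / l ^ e : ℕ) : ℝ) := by
    rw [NN, sum_sigma', ← sum_filter_ne_zero]
    have hinj : Set.InjOn (fun x : (_ : ℕ) × ℕ => x.1 ^ x.2)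
        (k.primeFactors.sigma fun _ => Ico 1 (k * M + 1) : Finset ((_ : ℕ) × ℕ)) := by
      rintro ⟨l, e⟩ h ⟨l', e'⟩ h' heq
      simp only [coe_sigma, Set.mem_sigma_iff, mem_coe, Nat.mem_primeFactors, mem_Ico] at h h' heq
      obtain ⟨e0, rfl⟩ : ∃ x, e = x + 1 := ⟨e - 1, by omega⟩
      obtain ⟨e1, rfl⟩ : ∃ x, e' = x + 1 := ⟨e' - 1, by omega⟩
      obtain ⟨h1, h2⟩ := Nat.Prime.pow_inj h.1.1 h'.1.1 heq
      subst h1; subst h2; rfl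
    rw [← sum_image (f := fun d => vonMangoldt d * ((M / d : ℕ) : ℝ)) hinj]
    apply sum_le_sum_of_subset_of_nonneg
    · intro d hd
      simp only [mem_filter, mem_Ioc] at hd
      obtain ⟨⟨⟨h0, hX⟩, hcop⟩, hne⟩ := hd
      have hpp := vonMangoldt_ne_zero_iff.1 (left_ne_zero_of_mul hne)
      obtain ⟨l, e, hl, he, rfl⟩ := (isPrimePow_nat_iff _).1 hpp
      refine mem_image.2 ⟨⟨l, e⟩, ?_, rfl⟩
      simp only [mem_sigma, Nat.mem_primeFactors, mem_Ico]
      refine ⟨⟨hl, ?_, by omega⟩, by omega, ?_⟩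
      · by_contra hlk
        exact hcop (Nat.Coprime.pow_left _ ((hl.coprime_iff_not_dvd).2 hlk))
      · have := Nat.lt_pow_self hl.one_lt (n := e)
        omega
    · intro d _ _; exact hnn d
  refine h1.trans ?_
  rw [mul_sum]
  apply sum_le_sum
  intro l hl
  have hlp := Nat.prime_of_mem_primeFactors hl
  have h2 : ∑ e ∈ Ico 1 (k * M + 1), vonMangoldt (l ^ e) * ((M / l ^ e : ℕ) : ℝ) =
      Real.log l * ((∑ e ∈ Ico 1 (k * M + 1), M / l ^ e : ℕ) : ℝ) := by
    push_cast
    rw [mul_sum]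
    apply sum_congr rfl
    intro e he
    rw [vonMangoldt_apply_pow (by have := (mem_Ico.1 he).1; omega), vonMangoldt_apply_prime hlp]
  rw [h2]
  have h3 := Nat.geom_sum_Ico_le hlp.two_le M (k * M + 1)
  have h4 : ((∑ e ∈ Ico 1 (k * M + 1), M / l ^ e : ℕ) : ℝ) ≤ M / (l - 1) := by
    calc _ ≤ ((M / (l - 1) : ℕ) : ℝ) := by exact_mod_cast h3
      _ ≤ (M : ℝ) / ((l - 1 : ℕ) : ℝ) := Nat.cast_div_le
      _ = _ := by rw [Nat.cast_sub hlp.one_le]; simp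
  calc _ ≤ Real.log l * (M / (l - 1)) := by
        apply mul_le_mul_of_nonneg_left h4 (Real.log_natCast_nonneg l)
    _ = _ := by ring

/-- upper bound: prime powers of the class `c mod k` in `(M, kM]`. -/
lemma upper (k c M : ℕ) (hc : 1 ≤ c) (hck : c ≤ k) (hcop : Nat.Coprime c k) :
    ∑ d ∈ Ioc M (k * M) with d ≡ c [MOD k], vonMangoldt d ≤
      M * (Real.log k + ∑ l ∈ k.primeFactors, Real.log l / (l - 1)) := by
  have h1 := DD_add_NN k c M hc hck hcop
  have h2 := DD_le k c M hc hck
  have h3 := NN_le k M (by omega)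
  have h4 : ∑ d ∈ Ioc M (k * M) with d ≡ c [MOD k], vonMangoldt d ≤ DD k c M + NN k M := by
    rw [h1]
    calc _ ≤ ∑ d ∈ Ioc M (k * M) with d ≡ c [MOD k],
          vonMangoldt d * ((cnt k c M d : ℝ) - ((M / d : ℕ) : ℝ)) := by
          apply sum_le_sum
          intro d hd
          simp only [mem_filter, mem_Ioc] at hd
          have := cnt_pos k c M d hck hc hd.2 (by omega) hd.1.2
          rw [Nat.div_eq_of_lt hd.1.1]
          have : (1 : ℝ) ≤ cnt k c M d := by exact_mod_cast this
          have h0 : 0 ≤ vonMangoldt d := vonMangoldt_nonneg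
          push_cast
          nlinarith
      _ ≤ _ := by
          apply sum_le_sum_of_subset_of_nonneg
          · intro d hd
            simp only [mem_filter, mem_Ioc] at hd ⊢
            refine ⟨⟨by omega, hd.1.2⟩, ?_⟩
            rw [Nat.coprime_iff_gcd_eq_one, hd.2.gcd_eq]; exact hcop
          · intro d hd _
            simp only [mem_filter, mem_Ioc] at hd ⊢
            have := (cnt_bounds k c M d hd.1.1 hd.2).1
            apply mul_nonneg vonMangoldt_nonneg
            rw [sub_nonneg]; exact_mod_cast this
  linarith


/-- Chebyshev psi restricted to a class mod 12 -/
noncomputable def psc (y c : ℕ) : ℝ := ∑ d ∈ Ioc 0 y with d ≡ c [MOD 12], vonMangoldt d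

lemma psc_nonneg (y c : ℕ) : 0 ≤ psc y c := sum_nonneg fun _ _ => vonMangoldt_nonneg

lemma psc_mono (y z c : ℕ) (h : y ≤ z) : psc y c ≤ psc z c := by
  apply sum_le_sum_of_subset_of_nonneg
  · exact filter_subset_filter _ (Ioc_subset_Ioc_right h)
  · intros; exact vonMangoldt_nonneg

lemma psc_le_psi (y c : ℕ) : psc y c ≤ Chebyshev.psi y := by
  rw [psc, Chebyshev.psi, Nat.floor_natCast]
  apply sum_le_sum_of_subset_of_nonneg (filter_subset _ _)
  intros; exact vonMangoldt_nonneg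

lemma pf12 : Nat.primeFactors 12 = {2, 3} := by
  have : 12 = 2 ^ 2 * 3 ^ 1 := by norm_num
  rw [this, Nat.primeFactors_mul (by norm_num) (by norm_num),
    Nat.primeFactors_prime_pow (by norm_num) Nat.prime_two,
    Nat.primeFactors_prime_pow (by norm_num) Nat.prime_three]
  rfl

lemma log12 : Real.log 12 = 2 * Real.log 2 + Real.log 3 := by
  rw [show (12 : ℝ) = 2 ^ 2 * 3 by norm_num, Real.log_mul (by norm_num) (by norm_num), Real.log_pow]
  norm_num

lemma psc_step (M c : ℕ) (hcop : Nat.Coprime c 12) :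
    psc (12 * M) c ≤ 3.7278 * M + psc M c := by
  have hc' : Nat.Coprime (c % 12) 12 := by
    rw [Nat.coprime_iff_gcd_eq_one] at *
    rw [(Nat.mod_modEq c 12).gcd_eq]
    exact hcop
  have h1 : 1 ≤ c % 12 := by
    rcases Nat.eq_zero_or_pos (c % 12) with h | h
    · rw [h] at hc'; norm_num at hc'
    · exact h
  have h2 := upper 12 (c % 12) M h1 (Nat.mod_lt _ (by norm_num)).le hc'
  rw [pf12, sum_pair (by norm_num)] at h2
  have h3 : psc (12 * M) c = psc M c + ∑ d ∈ Ioc M (12 * M) with d ≡ c % 12 [MOD 12],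
      vonMangoldt d := by
    have e : ∀ d, d ≡ c % 12 [MOD 12] ↔ d ≡ c [MOD 12] := fun d => by
      simp [Nat.ModEq]
    simp_rw [e]
    rw [psc, psc, sum_filter, sum_filter, sum_filter]
    rw [sum_Ioc_consecutive _ (Nat.zero_le M) (by omega)]
  rw [h3]
  push_cast at h2
  rw [log12] at h2
  have l2 := Real.log_two_lt_d9
  have l3 := Real.log_three_lt_d9
  have hM : (0 : ℝ) ≤ M := Nat.cast_nonneg M
  have : (M : ℝ) * (2 * Real.log 2 + Real.log 3 + (Real.log 2 / (2 - 1) + Real.log 3 / (3 - 1)))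
      ≤ M * 3.7278 := by
    apply mul_le_mul_of_nonneg_left _ hM
    norm_num
    linarith
  linarith

lemma psc_le (c : ℕ) (hcop : Nat.Coprime c 12) (y : ℕ) : psc y c ≤ 0.35 * y + 2100 := by
  induction y using Nat.strong_induction_on with
  | _ y ih =>
    have l2 := Real.log_two_lt_d9
    by_cases hy : y < 410
    · have h1 := psc_le_psi y c
      have h2 := Chebyshev.psi_le_const_mul_self (x := y) (by positivity)
      have h4 : Real.log 4 = 2 * Real.log 2 := Real.log_four_eq
      have hy' : (y : ℝ) ≤ 409 := by exact_mod_cast (by omega : y ≤ 409)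
      have h0 : (0 : ℝ) ≤ y := by positivity
      rw [h4] at h2
      nlinarith
    · push Not at hy
      have h1 := psc_mono y (12 * (y / 12 + 1)) c (by omega)
      have h2 := psc_step (y / 12 + 1) c hcop
      have h3 := ih (y / 12 + 1) (by omega)
      have h4 : ((y / 12 + 1 : ℕ) : ℝ) ≤ y / 12 + 1 := by
        push_cast
        have := Nat.cast_div_le (α := ℝ) (m := y) (n := 12)
        push_cast at this
        linarith
      have hy' : (410 : ℝ) ≤ y := by exact_mod_cast hy
      linarith

lemma cnt_class (c M d b : ℕ) (hcop : Nat.Coprime c 12) (hck : c ≤ 12)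
    (hb : b = 1 ∨ b = 5 ∨ b = 7 ∨ b = 11)
    (hd : d ≡ c * b [MOD 12]) (h : 12 * M < d * b) : cnt 12 c M d = 0 := by
  rw [cnt, card_eq_zero, filter_eq_empty_iff]
  rintro j hj ⟨t, ht⟩
  have hj := mem_range.1 hj
  have h1 : c * (b * t) ≡ c * 1 [MOD 12] := by
    calc c * (b * t) = (c * b) * t := by ring
      _ ≡ d * t [MOD 12] := (hd.symm.mul_right t)
      _ = c + 12 * j := ht.symm
      _ ≡ c * 1 [MOD 12] := by simp [Nat.ModEq]
  have h2 : b * t ≡ 1 [MOD 12] := Nat.ModEq.cancel_left_of_coprime (by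
    rw [Nat.gcd_comm]; exact hcop) h1
  have h3 : b ≤ t := by
    unfold Nat.ModEq at h2
    by_contra hlt
    push Not at hlt
    rcases hb with rfl | rfl | rfl | rfl <;> interval_cases t <;> omega
  have := Nat.mul_le_mul_left d h3
  omega

lemma class_cases (c d : ℕ) (hc : Nat.Coprime c 12) (hd : Nat.Coprime d 12) :
    d ≡ c [MOD 12] ∨ d ≡ c * 5 [MOD 12] ∨ d ≡ c * 7 [MOD 12] ∨ d ≡ c * 11 [MOD 12] := by
  have key : ∀ x < 12, ∀ y < 12, Nat.gcd x 12 = 1 → Nat.gcd y 12 = 1 →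
      y = x ∨ y = x * 5 % 12 ∨ y = x * 7 % 12 ∨ y = x * 11 % 12 := by
    have key : ∀ x : Fin 12, ∀ y : Fin 12, Nat.gcd x 12 = 1 → Nat.gcd y 12 = 1 →
      y.1 = x.1 ∨ y.1 = x.1 * 5 % 12 ∨ y.1 = x.1 * 7 % 12 ∨ y.1 = x.1 * 11 % 12 := by decide
    intro x hx y hy
    exact key ⟨x, hx⟩ ⟨y, hy⟩
  have := key (c % 12) (Nat.mod_lt _ (by norm_num)) (d % 12) (Nat.mod_lt _ (by norm_num))
    (by rw [(Nat.mod_modEq c 12).gcd_eq]; exact hc) (by rw [(Nat.mod_modEq d 12).gcd_eq]; exact hd)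
  simpa [Nat.ModEq, Nat.mul_mod] using this

lemma DD_upper (c M : ℕ) (hc : 1 ≤ c) (hck : c ≤ 12) (hcop : Nat.Coprime c 12) :
    DD 12 c M + NN 12 M ≤ psc (12 * M) c + psc (12 * M / 5) (c * 5) + psc (12 * M / 7) (c * 7)
      + psc (12 * M / 11) (c * 11) := by
  rw [DD_add_NN 12 c M hc hck hcop]
  have hp : ∀ b, 0 < b → psc (12 * M / b) (c * b) =
      ∑ d ∈ Ioc 0 (12 * M), if d ≡ c * b [MOD 12] ∧ d * b ≤ 12 * M then vonMangoldt d else 0 := by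
    intro b hb
    rw [psc, ← sum_filter]
    apply sum_congr _ (fun _ _ => rfl)
    ext d
    simp only [mem_filter, mem_Ioc, Nat.le_div_iff_mul_le hb]
    constructor
    · rintro ⟨⟨h1, h2⟩, h3⟩
      refine ⟨⟨h1, ?_⟩, h3, h2⟩
      nlinarith
    · rintro ⟨⟨h1, h2⟩, h3, h4⟩
      exact ⟨⟨h1, h4⟩, h3⟩
  have hp1 : psc (12 * M) c =
      ∑ d ∈ Ioc 0 (12 * M), if d ≡ c [MOD 12] then vonMangoldt d else 0 := by
    rw [psc, ← sum_filter]
  rw [hp 5 (by norm_num), hp 7 (by norm_num), hp 11 (by norm_num), hp1, ← sum_add_distrib,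
    ← sum_add_distrib, ← sum_add_distrib, sum_filter]
  apply sum_le_sum
  intro d hd
  have hd := mem_Ioc.1 hd
  have hL : 0 ≤ vonMangoldt d := vonMangoldt_nonneg
  have n1 : 0 ≤ if d ≡ c [MOD 12] then vonMangoldt d else 0 := by split_ifs <;> simp [hL]
  have n2 : ∀ b, 0 ≤ if d ≡ c * b [MOD 12] ∧ d * b ≤ 12 * M then vonMangoldt d else 0 := by
    intro b; split_ifs <;> simp [hL]
  have n5 := n2 5
  have n7 := n2 7
  have n11 := n2 11
  by_cases hcd : Nat.Coprime d 12
  swap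
  · rw [if_neg hcd]; linarith
  rw [if_pos hcd]
  have hb := (cnt_bounds 12 c M d hd.1 hcd).2
  have hle : vonMangoldt d * ((cnt 12 c M d : ℝ) - ((M / d : ℕ) : ℝ)) ≤ vonMangoldt d := by
    have : (cnt 12 c M d : ℝ) ≤ ((M / d : ℕ) : ℝ) + 1 := by exact_mod_cast hb
    nlinarith
  have hz : ∀ b, (b = 1 ∨ b = 5 ∨ b = 7 ∨ b = 11) → d ≡ c * b [MOD 12] →
      vonMangoldt d * ((cnt 12 c M d : ℝ) - ((M / d : ℕ) : ℝ)) ≤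
        if d ≡ c * b [MOD 12] ∧ d * b ≤ 12 * M then vonMangoldt d else 0 := by
    intro b hb hdb
    split_ifs with h
    · exact hle
    · have h' : 12 * M < d * b := by
        by_contra h'; exact h ⟨hdb, by omega⟩
      rw [cnt_class c M d b hcop hck hb hdb h']
      have : (0 : ℝ) ≤ ((M / d : ℕ) : ℝ) := Nat.cast_nonneg _
      push_cast at *
      nlinarith
  rcases class_cases c d hcop hcd with h | h | h | h
  · rw [if_pos h]; linarith
  · have := hz 5 (by simp) h; linarith
  · have := hz 7 (by simp) h; linarith
  · have := hz 11 (by simp) h; linarith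

lemma NN12_ge (M : ℕ) (hM : 7 ≤ M) : 1.2247 * M - 9 ≤ NN 12 M := by
  have h1 : ∑ d ∈ ({2, 4, 8, 16, 32, 64, 3, 9, 27, 81} : Finset ℕ),
      vonMangoldt d * ((M / d : ℕ) : ℝ) ≤ NN 12 M := by
    apply sum_le_sum_of_subset_of_nonneg
    · intro d hd
      simp only [mem_insert, mem_singleton] at hd
      simp only [mem_filter, mem_Ioc]
      rcases hd with rfl | rfl | rfl | rfl | rfl | rfl | rfl | rfl | rfl | rfl <;>
        exact ⟨⟨by norm_num, by omega⟩, by norm_num⟩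
    · intros
      exact mul_nonneg vonMangoldt_nonneg (Nat.cast_nonneg _)
  have hq : ∀ d : ℕ, 0 < d → (M : ℝ) / d - 1 ≤ ((M / d : ℕ) : ℝ) := by
    intro d hd
    have : M < d * (M / d + 1) := Nat.lt_mul_div_succ M hd
    have hd' : (0 : ℝ) < d := by exact_mod_cast hd
    rw [sub_le_iff_le_add, div_le_iff₀ hd']
    have h : (M : ℝ) ≤ ((d * (M / d + 1) : ℕ) : ℝ) := by exact_mod_cast this.le
    push_cast at h ⊢
    linarith
  have v2 : ∀ i, i ≠ 0 → vonMangoldt (2 ^ i) = Real.log 2 := by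
    intro i hi
    rw [vonMangoldt_apply_pow hi, vonMangoldt_apply_prime Nat.prime_two]; norm_num
  have v3 : ∀ i, i ≠ 0 → vonMangoldt (3 ^ i) = Real.log 3 := by
    intro i hi
    rw [vonMangoldt_apply_pow hi, vonMangoldt_apply_prime Nat.prime_three]; norm_num
  have a1 := v2 1 (by norm_num)
  have a2 := v2 2 (by norm_num)
  have a3 := v2 3 (by norm_num)
  have a4 := v2 4 (by norm_num)
  have a5 := v2 5 (by norm_num)
  have a6 := v2 6 (by norm_num)
  have b1 := v3 1 (by norm_num)
  have b2 := v3 2 (by norm_num)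
  have b3 := v3 3 (by norm_num)
  have b4 := v3 4 (by norm_num)
  norm_num only at a1 a2 a3 a4 a5 a6 b1 b2 b3 b4
  rw [sum_insert (by decide), sum_insert (by decide), sum_insert (by decide),
    sum_insert (by decide), sum_insert (by decide), sum_insert (by decide), sum_insert (by decide),
    sum_insert (by decide), sum_insert (by decide), sum_singleton,
    a1, a2, a3, a4, a5, a6, b1, b2, b3, b4] at h1
  have c1 := hq 2 (by norm_num)
  have c2 := hq 4 (by norm_num)
  have c3 := hq 8 (by norm_num)
  have c4 := hq 16 (by norm_num)
  have c5 := hq 32 (by norm_num)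
  have c6 := hq 64 (by norm_num)
  have d1 := hq 3 (by norm_num)
  have d2 := hq 9 (by norm_num)
  have d3 := hq 27 (by norm_num)
  have d4 := hq 81 (by norm_num)
  push_cast at c1 c2 c3 c4 c5 c6 d1 d2 d3 d4
  have l2 := Real.log_two_gt_d9
  have l3 := Real.log_three_gt_d9
  have l2' := Real.log_two_lt_d9
  have l3' := Real.log_three_lt_d9
  have s2 : Real.log 2 * (63 / 64 * M - 6) ≤ Real.log 2 * (((M / 2 : ℕ) : ℝ) + ((M / 4 : ℕ) : ℝ)
    + ((M / 8 : ℕ) : ℝ) + ((M / 16 : ℕ) : ℝ) + ((M / 32 : ℕ) : ℝ) + ((M / 64 : ℕ) : ℝ)) := by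
    apply mul_le_mul_of_nonneg_left _ (by linarith)
    linarith
  have s3 : Real.log 3 * (40 / 81 * M - 4) ≤ Real.log 3 * (((M / 3 : ℕ) : ℝ) + ((M / 9 : ℕ) : ℝ)
    + ((M / 27 : ℕ) : ℝ) + ((M / 81 : ℕ) : ℝ)) := by
    apply mul_le_mul_of_nonneg_left _ (by linarith)
    linarith
  have hM0 : (7 : ℝ) ≤ M := by exact_mod_cast hM
  nlinarith

lemma psc_ge (c M : ℕ) (hc : 1 ≤ c) (hck : c ≤ 12) (hcop : Nat.Coprime c 12) (hM : 7 ≤ M) :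
    1.887 * M - 6309 - Real.log (12 * M) ≤ psc (12 * M) c := by
  have h1 := DD_upper c M hc hck hcop
  have h2 := NN12_ge M hM
  have h3 := DD_ge 12 c M hc hck (by omega)
  have h5 := psc_le (c * 5) (by rw [Nat.coprime_mul_iff_left]; exact ⟨hcop, by norm_num⟩)
    (12 * M / 5)
  have h7 := psc_le (c * 7) (by rw [Nat.coprime_mul_iff_left]; exact ⟨hcop, by norm_num⟩)
    (12 * M / 7)
  have h11 := psc_le (c * 11) (by rw [Nat.coprime_mul_iff_left]; exact ⟨hcop, by norm_num⟩)
    (12 * M / 11)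
  have d5 := Nat.cast_div_le (α := ℝ) (m := 12 * M) (n := 5)
  have d7 := Nat.cast_div_le (α := ℝ) (m := 12 * M) (n := 7)
  have d11 := Nat.cast_div_le (α := ℝ) (m := 12 * M) (n := 11)
  push_cast at *
  rw [log12] at h3
  have l2 := Real.log_two_gt_d9
  have l3 := Real.log_three_gt_d9
  have hM0 : (7 : ℝ) ≤ M := by exact_mod_cast hM
  have : (M : ℝ) * 2.4849 ≤ M * (2 * Real.log 2 + Real.log 3) :=
    mul_le_mul_of_nonneg_left (by linarith) (by linarith)
  linarith

/-- theta restricted to a class mod 12 -/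
lemma theta_ge (y c : ℕ) (hy : 1 ≤ y) : psc y c - 2 * √(y : ℝ) * Real.log y ≤
    ∑ p ∈ Ioc 0 y with p.Prime ∧ p ≡ c [MOD 12], Real.log p := by
  have h1 := Chebyshev.psi_sub_theta_eq_sum_not_prime (y : ℝ)
  have h2 := Chebyshev.psi_sub_theta_le (x := y) (by exact_mod_cast hy)
  rw [h1, Nat.floor_natCast] at h2
  have h3 : psc y c = ∑ p ∈ Ioc 0 y with p.Prime ∧ p ≡ c [MOD 12], Real.log p +
      ∑ p ∈ Ioc 0 y with ¬ p.Prime ∧ p ≡ c [MOD 12], vonMangoldt p := by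
    rw [psc, ← sum_filter_add_sum_filter_not _ (fun p => p.Prime), filter_filter, filter_filter]
    congr 1
    · apply sum_congr
      · ext; simp; tauto
      · intro p hp
        simp only [mem_filter] at hp
        exact vonMangoldt_apply_prime hp.2.1
    · apply sum_congr _ (fun _ _ => rfl)
      ext; simp; tauto
  have h4 : ∑ p ∈ Ioc 0 y with ¬ p.Prime ∧ p ≡ c [MOD 12], vonMangoldt p ≤
      ∑ p ∈ Ioc 0 y with ¬ p.Prime, vonMangoldt p := by
    apply sum_le_sum_of_subset_of_nonneg
    · intro p; simp; tauto
    · intros; exact vonMangoldt_nonneg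
  linarith

end PSC

namespace PSC
open Finset ArithmeticFunction

/-- the weight attached to a prime `q` -/
noncomputable def gg (q : ℕ) : ℝ :=
  Real.log 12 + 2 * Real.log q + (Real.log 2 + (Real.log 3 / 2 + Real.log q / (q - 1)))

lemma gg_nonneg (q : ℕ) (h : 5 ≤ q) : 0 ≤ gg q := by
  have h1 : (5 : ℝ) ≤ q := by exact_mod_cast h
  have : 0 ≤ Real.log q := Real.log_natCast_nonneg q
  have : 0 ≤ Real.log 12 := Real.log_nonneg (by norm_num)
  have : 0 ≤ Real.log 2 := Real.log_nonneg (by norm_num)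
  have : 0 ≤ Real.log 3 := Real.log_nonneg (by norm_num)
  have : 0 ≤ Real.log q / (q - 1) := div_nonneg (by assumption) (by linarith)
  unfold gg
  linarith

lemma pf_q (q : ℕ) (hq : q.Prime) : (12 * q ^ 2).primeFactors = {2, 3, q} := by
  rw [Nat.primeFactors_mul (by norm_num) (pow_ne_zero _ hq.ne_zero), pf12,
    Nat.primeFactors_prime_pow (by norm_num) hq]
  rfl

lemma inner (n a q T : ℕ) (hq : q.Prime) (h5 : 5 ≤ q) (hT : n / 300 + 1 ≤ T)
    (hqT : q ≤ T) :
    ∑ p ∈ Ioc T n with p.Prime ∧ p ≡ a [MOD 12] ∧ q ^ 2 ∣ n - p, Real.log p ≤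
      ((n : ℝ) / (12 * q ^ 2) + 1) * gg q := by
  set S := {p ∈ Ioc T n | p.Prime ∧ p ≡ a [MOD 12] ∧ q ^ 2 ∣ n - p} with hS
  rcases S.eq_empty_or_nonempty with h | ⟨p0, hp0⟩
  · rw [h, sum_empty]
    exact mul_nonneg (by positivity) (gg_nonneg q h5)
  set k := 12 * q ^ 2 with hk
  set M := n / k + 1 with hM
  have hq25 : 25 ≤ q ^ 2 := by nlinarith
  have hk300 : 300 ≤ k := by omega
  have hMT : M ≤ T := by
    have := Nat.div_le_div_left (a := n) hk300 (by norm_num)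
    omega
  have hkM : n ≤ k * M := (Nat.lt_mul_div_succ n (by omega)).le
  have hcq : Nat.Coprime 12 (q ^ 2) := by
    apply Nat.Coprime.pow_right
    rw [Nat.coprime_comm, hq.coprime_iff_not_dvd]
    intro h
    have h1 := Nat.mem_primeFactors.2 ⟨hq, h, by norm_num⟩
    rw [pf12] at h1
    simp at h1
    omega
  simp only [hS, mem_filter, mem_Ioc] at hp0
  obtain ⟨⟨hp0T, hp0n⟩, hp0p, hp0a, hp0q⟩ := hp0
  have hcop0 : Nat.Coprime p0 k := by
    rw [hp0p.coprime_iff_not_dvd]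
    intro h
    have h1 := Nat.mem_primeFactors.2 ⟨hp0p, h, by omega⟩
    rw [hk, pf_q q hq] at h1
    simp at h1
    omega
  have hcop : Nat.Coprime (p0 % k) k := by
    rw [Nat.coprime_iff_gcd_eq_one, (Nat.mod_modEq p0 k).gcd_eq]; exact hcop0
  have hc1 : 1 ≤ p0 % k := by
    rcases Nat.eq_zero_or_pos (p0 % k) with h | h
    · rw [h] at hcop; rw [Nat.coprime_zero_left] at hcop; omega
    · exact h
  have hup := upper k (p0 % k) M hc1 (Nat.mod_lt _ (by omega)).le hcop
  have hsum : ∑ p ∈ S, Real.log p ≤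
      ∑ d ∈ Ioc M (k * M) with d ≡ p0 % k [MOD k], vonMangoldt d := by
    calc _ = ∑ p ∈ S, vonMangoldt p := by
          apply sum_congr rfl
          intro p hp
          simp only [hS, mem_filter] at hp
          rw [vonMangoldt_apply_prime hp.2.1]
      _ ≤ _ := by
          apply sum_le_sum_of_subset_of_nonneg
          · intro p hp
            simp only [hS, mem_filter, mem_Ioc] at hp ⊢
            obtain ⟨⟨hpT, hpn⟩, hpp, hpa, hpq⟩ := hp
            refine ⟨⟨by omega, by omega⟩, ?_⟩
            refine Nat.ModEq.trans ?_ (Nat.mod_modEq p0 k).symm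
            rw [hk, ← Nat.modEq_and_modEq_iff_modEq_mul hcq]
            refine ⟨hpa.trans hp0a.symm, ?_⟩
            exact ((Nat.modEq_iff_dvd' hpn).2 hpq).trans ((Nat.modEq_iff_dvd' hp0n).2 hp0q).symm
          · intros; exact vonMangoldt_nonneg
  have hkq : Real.log k + ∑ l ∈ k.primeFactors, Real.log l / ((l : ℝ) - 1) = gg q := by
    have hq0 : (q : ℝ) ≠ 0 := by exact_mod_cast hq.ne_zero
    rw [hk, pf_q q hq, sum_insert (by simp; omega), sum_insert (by simp; omega), sum_singleton]
    push_cast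
    rw [Real.log_mul (by norm_num) (by positivity), Real.log_pow]
    unfold gg
    norm_num
  rw [hkq] at hup
  refine (hsum.trans hup).trans ?_
  apply mul_le_mul_of_nonneg_right _ (gg_nonneg q h5)
  rw [hM]
  push_cast
  have := Nat.cast_div_le (α := ℝ) (m := n) (n := k)
  rw [hk] at this ⊢
  push_cast at this ⊢
  linarith

lemma sum_biUnion_le' (s : Finset ℕ) (t : ℕ → Finset ℕ) (f : ℕ → ℝ) (hf : ∀ x, 0 ≤ f x) :
    ∑ x ∈ s.biUnion t, f x ≤ ∑ i ∈ s, ∑ x ∈ t i, f x := by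
  induction s using Finset.induction_on with
  | empty => simp
  | insert i s hi ih =>
    rw [biUnion_insert, sum_insert hi]
    have h := sum_union_inter (s₁ := t i) (s₂ := s.biUnion t) (f := f)
    have h0 : 0 ≤ ∑ x ∈ t i ∩ s.biUnion t, f x := sum_nonneg fun x _ => hf x
    linarith

/-- if there is no representation, the logs of primes are bounded by the sums over `q` -/
lemma cover (n a T : ℕ) (hn : 2000000 ≤ n) (hT : T = n / 300 + 1)
    (h3 : n % 3 ≠ a % 3) (h4 : n % 4 ≠ a % 4)
    (hno : ¬ ∃ p k : ℕ, p.Prime ∧ Squarefree k ∧ Nat.gcd k 3 = 1 ∧ n = p + k) :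
    ∑ p ∈ Ioc T n with p.Prime ∧ p ≡ a [MOD 12], Real.log p ≤
      ∑ q ∈ Icc 5 (Nat.sqrt n) with q.Prime, ((n : ℝ) / (12 * q ^ 2) + 1) * gg q := by
  have h1 : ∑ p ∈ Ioc T n with p.Prime ∧ p ≡ a [MOD 12], Real.log p ≤
      ∑ q ∈ Icc 5 (Nat.sqrt n) with q.Prime,
        ∑ p ∈ Ioc T n with p.Prime ∧ p ≡ a [MOD 12] ∧ q ^ 2 ∣ n - p, Real.log p := by
    calc _ ≤ ∑ p ∈ ({q ∈ Icc 5 (Nat.sqrt n) | q.Prime}).biUnion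
          (fun q => {p ∈ Ioc T n | p.Prime ∧ p ≡ a [MOD 12] ∧ q ^ 2 ∣ n - p}), Real.log p := by
          apply sum_le_sum_of_subset_of_nonneg
          · intro p hp
            simp only [mem_filter, mem_Ioc] at hp
            obtain ⟨⟨hpT, hpn⟩, hpp, hpa⟩ := hp
            have e3 : (n - p) % 3 ≠ 0 := by unfold Nat.ModEq at hpa; omega
            have e4 : (n - p) % 4 ≠ 0 := by unfold Nat.ModEq at hpa; omega
            have hns : ¬ Squarefree (n - p) := by
              intro hs
              refine hno ⟨p, n - p, hpp, hs, ?_, by omega⟩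
              rw [Nat.gcd_comm]
              exact (Nat.prime_three.coprime_iff_not_dvd).2 (by omega)
            rw [Nat.squarefree_iff_prime_squarefree] at hns
            push Not at hns
            obtain ⟨q, hq, hqd⟩ := hns
            have hqle := Nat.le_of_dvd (by omega) hqd
            have q2 : q ≠ 2 := by rintro rfl; omega
            have q3 : q ≠ 3 := by rintro rfl; omega
            have q4 : q ≠ 4 := by rintro rfl; norm_num at hq
            have := hq.two_le
            simp only [mem_biUnion, mem_filter, mem_Icc, mem_Ioc]
            refine ⟨q, ⟨⟨by omega, Nat.le_sqrt.2 (by omega)⟩, hq⟩, ⟨hpT, hpn⟩, hpp, hpa, ?_⟩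
            rw [pow_two]; exact hqd
          · intros; exact Real.log_natCast_nonneg _
      _ ≤ _ := by
          exact sum_biUnion_le' _ _ _ fun p => Real.log_natCast_nonneg p
  refine h1.trans (sum_le_sum ?_)
  intro q hq
  simp only [mem_filter, mem_Icc] at hq
  apply inner n a q T hq.2 hq.1.1 hT.ge
  have := Nat.le_sqrt.1 hq.1.2
  by_cases h : q < 300
  · omega
  · have : 300 * q ≤ n := by nlinarith
    omega

lemma tail_step (x : ℝ) (hx : 2 ≤ x) :
    (3.848 + 2 * Real.log (x + 1)) / (x + 1) ^ 2 ≤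
      (5.848 + 2 * Real.log x) / x - (5.848 + 2 * Real.log (x + 1)) / (x + 1) := by
  have hx0 : 0 < x := by linarith
  have h1 : Real.log (x + 1) - 1 / x ≤ Real.log x := by
    have h := Real.log_le_sub_one_of_pos (x := (x + 1) / x) (by positivity)
    rw [Real.log_div (by positivity) (by positivity)] at h
    have : (x + 1) / x - 1 = 1 / x := by field_simp; ring
    linarith
  have hL : 0 ≤ Real.log (x + 1) := Real.log_nonneg (by linarith)
  set L := Real.log (x + 1)
  have h2 : (5.848 + 2 * (L - 1 / x)) / x ≤ (5.848 + 2 * Real.log x) / x := by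
    gcongr
  refine le_trans ?_ (sub_le_sub_right h2 _)
  have e : (5.848 + 2 * (L - 1 / x)) / x - (5.848 + 2 * L) / (x + 1)
      - (3.848 + 2 * L) / (x + 1) ^ 2 =
      ((3.848 + 2 * L) * x - 2 * (x + 1)) / (x ^ 2 * (x + 1) ^ 2) := by
    field_simp
    ring
  have : 0 ≤ ((3.848 + 2 * L) * x - 2 * (x + 1)) / (x ^ 2 * (x + 1) ^ 2) := by
    apply div_nonneg _ (by positivity)
    nlinarith
  linarith

lemma tail_sum (N : ℕ) (hN : 30 ≤ N) :
    ∑ q ∈ Ico 30 N, (3.848 + 2 * Real.log q) / (q : ℝ) ^ 2 ≤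
      (5.848 + 2 * Real.log 29) / 29 - (5.848 + 2 * Real.log (N - 1)) / (N - 1) := by
  induction N, hN using Nat.le_induction with
  | base => norm_num
  | succ N hN ih =>
    rw [sum_Ico_succ_top hN]
    have hN' : (30 : ℝ) ≤ N := by exact_mod_cast hN
    have h := tail_step (N - 1) (by linarith)
    rw [sub_add_cancel] at h
    push_cast
    rw [add_sub_cancel_right]
    linarith

lemma log_le_two (q a b : ℕ) (hq : 0 < q) (hb : 0 < b) (h : q ^ b ≤ 2 ^ a) :
    Real.log q ≤ a / b * Real.log 2 := by
  have h1 : Real.log ((q : ℝ) ^ b) ≤ Real.log ((2 : ℝ) ^ a) := by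
    apply Real.log_le_log (by positivity)
    exact_mod_cast h
  rw [Real.log_pow, Real.log_pow] at h1
  have hb' : (0 : ℝ) < b := by exact_mod_cast hb
  rw [div_mul_eq_mul_div, le_div_iff₀ hb']
  linarith

lemma gg_le (q : ℕ) (t u : ℝ) (h5 : 5 ≤ q) (h : Real.log q ≤ t) (hu : t / (q - 1) ≤ u) :
    gg q ≤ 3.7278 + 2 * t + u := by
  have h1 : (5 : ℝ) ≤ q := by exact_mod_cast h5
  have l2 := Real.log_two_lt_d9
  have l3 := Real.log_three_lt_d9
  have : Real.log q / (q - 1) ≤ t / (q - 1) := by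
    apply div_le_div_of_nonneg_right h; linarith
  unfold gg
  rw [log12]
  linarith

lemma term_le (q a b : ℕ) (r : ℝ) (h5 : 5 ≤ q) (hb : 0 < b) (h : q ^ b ≤ 2 ^ a)
    (hr : (3.7278 + 2 * (a / b * 0.69315) + a / b * 0.69315 / (q - 1)) / (q : ℝ) ^ 2 ≤ r) :
    gg q / (q : ℝ) ^ 2 ≤ r := by
  refine le_trans ?_ hr
  apply div_le_div_of_nonneg_right _ (by positivity)
  have l2 := Real.log_two_lt_d9
  apply gg_le q _ _ h5 _ le_rfl
  refine (log_le_two q a b (by omega) hb h).trans ?_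
  apply mul_le_mul_of_nonneg_left (by linarith) (by positivity)

lemma gg_tail (q : ℕ) (h : 30 ≤ q) : gg q ≤ 3.848 + 2 * Real.log q := by
  have h1 : (30 : ℝ) ≤ q := by exact_mod_cast h
  have l2 := Real.log_two_lt_d9
  have h30 := log_le_two 30 5 1 (by norm_num) (by norm_num) (by norm_num)
  have hl : Real.log q ≤ Real.log 30 + (q / 30 - 1) := by
    have h := Real.log_le_sub_one_of_pos (x := (q : ℝ) / 30) (by positivity)
    rw [Real.log_div (by positivity) (by positivity)] at h
    linarith
  push_cast at h30
  have hd : Real.log q / (q - 1) ≤ 0.12 := by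
    rw [div_le_iff₀ (by linarith)]
    linarith
  have := gg_le q (Real.log q) 0.12 (by omega) le_rfl hd
  linarith

lemma gg_all (q : ℕ) (h : 5 ≤ q) : gg q ≤ 4.138 + 2 * Real.log q := by
  have h1 : (5 : ℝ) ≤ q := by exact_mod_cast h
  have l2 := Real.log_two_lt_d9
  have h5 := log_le_two 5 7 3 (by norm_num) (by norm_num) (by norm_num)
  have hl : Real.log q ≤ Real.log 5 + (q / 5 - 1) := by
    have h := Real.log_le_sub_one_of_pos (x := (q : ℝ) / 5) (by positivity)
    rw [Real.log_div (by positivity) (by positivity)] at h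
    linarith
  push_cast at h5
  have hd : Real.log q / (q - 1) ≤ 0.41 := by
    rw [div_le_iff₀ (by linarith)]
    linarith
  have := gg_le q (Real.log q) 0.41 (by omega) le_rfl hd
  linarith

lemma main_sum (s : ℕ) (hs : 30 ≤ s) :
    ∑ q ∈ Icc 5 s with q.Prime, gg q / (q : ℝ) ^ 2 ≤ 1.135 := by
  have h1 : ∑ q ∈ Icc 5 s with q.Prime, gg q / (q : ℝ) ^ 2 ≤
      ∑ q ∈ ({5, 7, 11, 13, 17, 19, 23, 29} : Finset ℕ) ∪ Ico 30 (s + 1), gg q / (q : ℝ) ^ 2 := by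
    apply sum_le_sum_of_subset_of_nonneg
    · intro q hq
      simp only [mem_filter, mem_Icc] at hq
      obtain ⟨⟨h5, hqs⟩, hq⟩ := hq
      rw [mem_union]
      by_cases h : q < 30
      · left
        interval_cases q <;> first | decide | (norm_num at hq)
      · right; rw [mem_Ico]; omega
    · intro q hq _
      refine div_nonneg (gg_nonneg q ?_) (by positivity)
      simp only [mem_union, mem_insert, mem_singleton, mem_Ico] at hq
      omega
  have hdis : Disjoint ({5, 7, 11, 13, 17, 19, 23, 29} : Finset ℕ) (Ico 30 (s + 1)) := by
    rw [disjoint_left]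
    intro q hq h
    simp only [mem_insert, mem_singleton, mem_Ico] at hq h
    omega
  rw [sum_union hdis] at h1
  have h2 : ∑ q ∈ Ico 30 (s + 1), gg q / (q : ℝ) ^ 2 ≤
      ∑ q ∈ Ico 30 (s + 1), (3.848 + 2 * Real.log q) / (q : ℝ) ^ 2 := by
    apply sum_le_sum
    intro q hq
    apply div_le_div_of_nonneg_right (gg_tail q (mem_Ico.1 hq).1) (by positivity)
  have h3 := tail_sum (s + 1) (by omega)
  have hs' : (30 : ℝ) ≤ s := by exact_mod_cast hs
  have h4 : 0 ≤ (5.848 + 2 * Real.log (((s + 1 : ℕ) : ℝ) - 1)) / (((s + 1 : ℕ) : ℝ) - 1) := by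
    push_cast
    rw [add_sub_cancel_right]
    have := Real.log_natCast_nonneg s
    positivity
  have l29 := log_le_two 29 5 1 (by norm_num) (by norm_num) (by norm_num)
  push_cast at l29
  have l2 := Real.log_two_lt_d9
  rw [sum_insert (by decide), sum_insert (by decide), sum_insert (by decide),
    sum_insert (by decide), sum_insert (by decide), sum_insert (by decide), sum_insert (by decide),
    sum_singleton] at h1
  have t5 := term_le 5 7 3 0.296 (by norm_num) (by norm_num) (by norm_num) (by norm_num)
  have t7 := term_le 7 29 10 0.1660 (by norm_num) (by norm_num) (by norm_num) (by norm_num)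
  have t11 := term_le 11 7 2 0.0730 (by norm_num) (by norm_num) (by norm_num) (by norm_num)
  have t13 := term_le 13 38 10 0.0547 (by norm_num) (by norm_num) (by norm_num) (by norm_num)
  have t17 := term_le 17 17 4 0.0340 (by norm_num) (by norm_num) (by norm_num) (by norm_num)
  have t19 := term_le 19 17 4 0.0272 (by norm_num) (by norm_num) (by norm_num) (by norm_num)
  have t23 := term_le 23 28 6 0.0197 (by norm_num) (by norm_num) (by norm_num) (by norm_num)
  have t29 := term_le 29 5 1 0.0130 (by norm_num) (by norm_num) (by norm_num) (by norm_num)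
  push_cast at *
  linarith

lemma class_exists (n : ℕ) : ∃ a, 1 ≤ a ∧ a ≤ 12 ∧ Nat.Coprime a 12 ∧ n % 3 ≠ a % 3 ∧
    n % 4 ≠ a % 4 := by
  have key : ∀ x : Fin 3, ∀ y : Fin 4, ∃ a : Fin 12, 1 ≤ a.1 ∧ a.1 ≤ 12 ∧ Nat.gcd a.1 12 = 1 ∧
    x.1 ≠ a.1 % 3 ∧ y.1 ≠ a.1 % 4 := by decide
  obtain ⟨a, h⟩ := key ⟨n % 3, Nat.mod_lt _ (by norm_num)⟩ ⟨n % 4, Nat.mod_lt _ (by norm_num)⟩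
  exact ⟨a.1, h⟩

lemma large_case (n : ℕ) (hn : 2000000 ≤ n) :
    ∃ p k : ℕ, p.Prime ∧ Squarefree k ∧ Nat.gcd k 3 = 1 ∧ n = p + k := by
  by_contra hno
  obtain ⟨a, ha1, ha12, hacop, h3, h4⟩ := class_exists n
  have hcov := cover n a (n / 300 + 1) hn rfl h3 h4 hno
  have hn' : (2000000 : ℝ) ≤ n := by exact_mod_cast hn
  -- the square root
  set r : ℝ := √(n : ℝ) with hr
  have hrr : r * r = n := Real.mul_self_sqrt (by positivity)
  have hr1414 : (1414 : ℝ) ≤ r := by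
    apply Real.le_sqrt_of_sq_le; norm_num; linarith
  have hlogn : Real.log n = 2 * Real.log r := by
    rw [← hrr, Real.log_mul (by positivity) (by positivity)]; ring
  have hlogr : Real.log r ≤ 6.2782 + r / 1414 := by
    have l2 := Real.log_two_lt_d9
    have h := Real.log_le_sub_one_of_pos (x := r / 1414) (by positivity)
    rw [Real.log_div (by positivity) (by positivity)] at h
    have h' := log_le_two 1414 21 2 (by norm_num) (by norm_num) (by norm_num)
    push_cast at h'
    linarith
  have hlogr0 : 0 ≤ Real.log r := Real.log_nonneg (by linarith)
  -- upper bound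
  have hs30 : 30 ≤ Nat.sqrt n := Nat.le_sqrt.2 (by omega)
  have hsr : (Nat.sqrt n : ℝ) ≤ r := Real.nat_sqrt_le_real_sqrt
  have hup : ∑ q ∈ Icc 5 (Nat.sqrt n) with q.Prime, ((n : ℝ) / (12 * q ^ 2) + 1) * gg q ≤
      n / 12 * 1.135 + r * (4.138 + 2 * Real.log r) := by
    have e : ∀ q ∈ ({q ∈ Icc 5 (Nat.sqrt n) | q.Prime} : Finset ℕ),
        ((n : ℝ) / (12 * q ^ 2) + 1) * gg q ≤
        n / 12 * (gg q / (q : ℝ) ^ 2) + (4.138 + 2 * Real.log r) := by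
      intro q hq
      simp only [mem_filter, mem_Icc] at hq
      have hq0 : (0 : ℝ) < q := by exact_mod_cast hq.2.pos
      have h1 : (n : ℝ) / (12 * q ^ 2) * gg q = n / 12 * (gg q / (q : ℝ) ^ 2) := by
        field_simp
      have h2 := gg_all q hq.1.1
      have h3 : Real.log q ≤ Real.log r := by
        apply Real.log_le_log hq0
        refine le_trans ?_ hsr
        exact_mod_cast hq.1.2
      rw [add_mul, h1, one_mul]
      linarith
    refine (sum_le_sum e).trans ?_
    rw [sum_add_distrib, ← mul_sum, sum_const, nsmul_eq_mul]
    apply add_le_add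
    · exact mul_le_mul_of_nonneg_left (main_sum _ hs30) (by positivity)
    · apply mul_le_mul_of_nonneg_right _ (by positivity)
      refine le_trans ?_ hsr
      have : #{q ∈ Icc 5 (Nat.sqrt n) | q.Prime} ≤ Nat.sqrt n := by
        refine (card_filter_le _ _).trans ?_
        rw [Nat.card_Icc]; omega
      exact_mod_cast this
  -- lower bound
  have hlow := psc_ge a (n / 12) ha1 ha12 hacop (by omega)
  have hmono := psc_mono (12 * (n / 12)) n a (by omega)
  have hth := theta_ge n a (by omega)
  have hM : (n : ℝ) / 12 - 1 ≤ ((n / 12 : ℕ) : ℝ) := by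
    have : n ≤ 12 * (n / 12) + 12 := by omega
    have : (n : ℝ) ≤ ((12 * (n / 12) + 12 : ℕ) : ℝ) := by exact_mod_cast this
    push_cast at this
    linarith
  have hlogM : Real.log (12 * ((n / 12 : ℕ) : ℝ)) ≤ Real.log n := by
    apply Real.log_le_log
    · have : (0 : ℝ) < ((n / 12 : ℕ) : ℝ) := by exact_mod_cast (by omega : 0 < n / 12)
      positivity
    · exact_mod_cast (by omega : 12 * (n / 12) ≤ n)
  have hsplit : ∑ p ∈ Ioc 0 n with p.Prime ∧ p ≡ a [MOD 12], Real.log p ≤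
      1.38630 * (n / 300 + 1) + ∑ p ∈ Ioc (n / 300 + 1) n with p.Prime ∧ p ≡ a [MOD 12],
        Real.log p := by
    have h1 : ∑ p ∈ Ioc 0 (n / 300 + 1) with p.Prime ∧ p ≡ a [MOD 12], Real.log (p : ℝ) ≤
        1.38630 * (n / 300 + 1) := by
      have h2 : ∑ p ∈ Ioc 0 (n / 300 + 1) with p.Prime ∧ p ≡ a [MOD 12], Real.log (p : ℝ) ≤
          Chebyshev.theta ((n / 300 + 1 : ℕ) : ℝ) := by
        rw [Chebyshev.theta, Nat.floor_natCast]
        apply sum_le_sum_of_subset_of_nonneg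
        · intro p; simp only [mem_filter]; tauto
        · intros; exact Real.log_natCast_nonneg _
      have h3 := Chebyshev.theta_le_log4_mul_x (x := ((n / 300 + 1 : ℕ) : ℝ)) (by positivity)
      rw [Real.log_four_eq] at h3
      have l2 := Real.log_two_lt_d9
      have h4 : ((n / 300 + 1 : ℕ) : ℝ) ≤ n / 300 + 1 := by
        push_cast
        have := Nat.cast_div_le (α := ℝ) (m := n) (n := 300)
        push_cast at this
        linarith
      have h5 : 2 * Real.log 2 * ((n / 300 + 1 : ℕ) : ℝ) ≤ 1.38630 * (n / 300 + 1) :=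
        mul_le_mul (by linarith) h4 (by positivity) (by norm_num)
      linarith
    have h2 : ∑ p ∈ Ioc 0 n with p.Prime ∧ p ≡ a [MOD 12], Real.log (p : ℝ) =
        ∑ p ∈ Ioc 0 (n / 300 + 1) with p.Prime ∧ p ≡ a [MOD 12], Real.log (p : ℝ) +
        ∑ p ∈ Ioc (n / 300 + 1) n with p.Prime ∧ p ≡ a [MOD 12], Real.log (p : ℝ) := by
      rw [sum_filter, sum_filter, sum_filter, sum_Ioc_consecutive _ (Nat.zero_le _) (by omega)]
    linarith
  -- conclusion
  rw [← hr] at hth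
  rw [hlogn] at hth hlogM
  have hfin : 1.887 * ((n : ℝ) / 12 - 1) - 6309 - 2 * Real.log r - 2 * r * (2 * Real.log r) ≤
      1.38630 * (n / 300 + 1) + (n / 12 * 1.135 + r * (4.138 + 2 * Real.log r)) := by
    linarith
  have hrl : r * Real.log r ≤ r * (6.2782 + r / 1414) :=
    mul_le_mul_of_nonneg_left hlogr (by linarith)
  nlinarith

end PSC

/-- Every integer greater than two, except for 11, can be written as the sum of a prime
and a square-free number which is co-prime to three. -/
theorem prime_add_squarefree_coprime_three (n : ℕ) (hn : 2 < n) (hne : n ≠ 11) :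
    ∃ p k : ℕ, p.Prime ∧ Squarefree k ∧ Nat.gcd k 3 = 1 ∧ n = p + k := by
  by_cases h : n < 2000000
  · exact PSC.small_case n hn hne h
  · exact PSC.large_case n (by omega)
end
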